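/- arXiv:2204.01158 — 4 statements merged into one kernel-verified Lean document; each statement's English description precedes it below -/
import Mathlib

section
/- Let S be a regular system of difference fields on V over A, let u ⊆ V and let I be any collection of subsets of V. Then S(u) is linearly disjoint from ∏_{v∈I} S(v)^{alg} over ∏_{v∈I_u} S(v). (Third linear disjointness lemma for regular systems.) -/
/-- Subfields `E` and `F` of `K` containing `C` are linearly disjoint over `C`
if the multiplication map `E ⊗[C] F → K` is injective. -/
def LinearDisjointOver {K : Type*} [Field K] (C E F : Subfield K) : Prop :=
  (Submodule.span C (E : Set K)).LinearDisjoint (Submodule.span C (F : Set K))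

/-- The relative algebraic closure `E^{alg}` of a subfield `E` inside `K`. -/
def algCl {K : Type*} [Field K] (E : Subfield K) : Subfield K :=
  Subfield.closure {x : K | IsAlgebraic E x}

/-- The inversive closure `E^{inv}`: the smallest subfield of `K` containing `E`
closed under `σ` and `σ⁻¹`. -/
def invCl {K : Type*} [Field K] (σ : K ≃+* K) (E : Subfield K) : Subfield K :=
  sInf {F : Subfield K | E ≤ F ∧ (∀ x ∈ F, σ x ∈ F) ∧ ∀ x ∈ F, σ.symm x ∈ F}

/-- `E` and `F` are independent over `C`: `((E·C)^{inv})^{alg}` and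
`((F·C)^{inv})^{alg}` are linearly disjoint over `(C^{inv})^{alg}`. -/
def IndependentOver {K : Type*} [Field K] (σ : K ≃+* K) (C E F : Subfield K) : Prop :=
  LinearDisjointOver (algCl (invCl σ C)) (algCl (invCl σ (E ⊔ C))) (algCl (invCl σ (F ⊔ C)))

/-- `F ≤ E` and `E/F` is a finite Galois extension (of subfields of `K`). -/
def IsFiniteGaloisExt {K : Type*} [Field K] (F E : Subfield K) : Prop :=
  ∃ h : F ≤ E,
    letI : Algebra F E := (Subfield.inclusion h).toAlgebra
    FiniteDimensional F E ∧ IsGalois F E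

/-- `I_u = {v ∩ u : v ∈ I}`. -/
def interFamily {V : Type*} [DecidableEq V] (I : Set (Finset V)) (u : Finset V) :
    Set (Finset V) :=
  {w | ∃ v ∈ I, w = v ∩ u}

/-- A system of difference fields on `V` over `A` inside `(K, σ)`. -/
structure DiffFieldSystem {K : Type*} [Field K] (σ : K ≃+* K)
    (V : Type*) [Fintype V] [DecidableEq V] (A : Subfield K) where
  /-- the underlying map from subsets of `V` to subfields of `K` -/
  S : Finset V → Subfield K
  mono : ∀ {u v : Finset V}, u ⊆ v → S u ≤ S v
  empty_eq : S ∅ = A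
  sigma_stable : ∀ u : Finset V, ∀ x ∈ S u, σ x ∈ S u
  perfect : ∀ u : Finset V, PerfectField (S u)
  /-- each `S u` has finite transcendence degree over `A` -/
  fin_trdeg : ∀ u : Finset V, ∃ t : Finset K,
    ∀ x ∈ S u, IsAlgebraic ↥(A ⊔ Subfield.closure (t : Set K)) x
  /-- each `S u` is the perfect closure of a difference subfield generated over
  `A` by a finite set (i.e. the smallest perfect `σ`-stable subfield of `K`
  containing `A` and that finite set) -/
  fin_gen : ∀ u : Finset V, ∃ t : Finset K,
    (A ≤ S u ∧ (t : Set K) ⊆ S u) ∧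
    ∀ F : Subfield K, A ≤ F → (t : Set K) ⊆ F → (∀ x ∈ F, σ x ∈ F) →
      PerfectField F → S u ≤ F
  /-- the family `(S {i})_{i ∈ V}` is independent over `A` -/
  indep : ∀ I₁ I₂ : Finset V, Disjoint I₁ I₂ →
    IndependentOver σ A (A ⊔ ⨆ i ∈ I₁, S {i}) (A ⊔ ⨆ i ∈ I₂, S {i})
  /-- for `|u| ≥ 2`, `S u` is a finite Galois extension of
  `S(u)⁻ = ∏_{v ∈ P(u)⁻} S v` -/
  galois : ∀ u : Finset V, 2 ≤ u.card →
    IsFiniteGaloisExt (⨆ v ∈ u.powerset.erase u, S v) (S u)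

namespace DiffFieldSystem

variable {K : Type*} [Field K] {σ : K ≃+* K}
variable {V : Type*} [Fintype V] [DecidableEq V] {A : Subfield K}

/-- `S(u)⁻ = ∏_{v ∈ P(u)⁻} S(v)`. -/
def Sminus (𝒮 : DiffFieldSystem σ V A) (u : Finset V) : Subfield K :=
  ⨆ v ∈ u.powerset.erase u, 𝒮.S v

/-- `𝒮` is an `I`-system: `S u = S(u)⁻` for `u ∉ I`. -/
def IsOn (𝒮 : DiffFieldSystem σ V A) (I : Set (Finset V)) : Prop :=
  ∀ u : Finset V, u ∉ I → 𝒮.S u = 𝒮.Sminus u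

/-- `𝒮` is regular: for every nonempty `u`, `S u` is linearly disjoint from
`∏_{v ∈ P(u)⁻} S(v)^{alg}` over `∏_{v ∈ P(u)⁻} S(v)`. -/
def Regular (𝒮 : DiffFieldSystem σ V A) : Prop :=
  ∀ u : Finset V, u ≠ ∅ →
    LinearDisjointOver (𝒮.Sminus u) (𝒮.S u) (⨆ v ∈ u.powerset.erase u, algCl (𝒮.S v))

end DiffFieldSystem

/-- `I` is a simplicial complex on `V`: downward closed with union all of `V`. -/
def IsSimplicialComplexOn (V : Type*) [DecidableEq V] (I : Set (Finset V)) : Prop :=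
  (∀ u ∈ I, ∀ v : Finset V, v ⊆ u → v ∈ I) ∧ ∀ i : V, ∃ u ∈ I, i ∈ u


/-- Working form of linear disjointness: families in `E` independent over `C`
stay independent over `F`. -/
def LD.{v} {K : Type v} [Field K] (C E F : Subfield K) : Prop :=
  ∀ (ι : Type v) (e : ι → K), (∀ i, e i ∈ E) → LinearIndependent C e → LinearIndependent F e

section LDbasics
universe uK
variable {K : Type uK} [Field K]

theorem span_extendScalars {C E : Subfield K} (h : C ≤ E) :
    Submodule.span C (E : Set K) =
      Subalgebra.toSubmodule (Subfield.extendScalars h).toSubalgebra := by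
  apply le_antisymm
  · rw [Submodule.span_le]
    intro x hx
    exact hx
  · intro x hx
    exact Submodule.subset_span hx

theorem ldo_iff_if {C E F : Subfield K} (hE : C ≤ E) (hF : C ≤ F) :
    LinearDisjointOver C E F ↔
      (Subfield.extendScalars hE).LinearDisjoint (Subfield.extendScalars hF) := by
  rw [IntermediateField.linearDisjoint_iff', Subalgebra.LinearDisjoint, LinearDisjointOver,
    span_extendScalars hE, span_extendScalars hF]

theorem ldo_iff {C E F : Subfield K} (hE : C ≤ E) (hF : C ≤ F) :
    LinearDisjointOver C E F ↔ LD C E F := by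
  rw [ldo_iff_if hE hF]
  constructor
  · intro H ι e he hli
    have := H.linearIndependent_left (a := fun i => (⟨e i, he i⟩ : Subfield.extendScalars hE)) (by
      refine LinearIndependent.of_comp (Subfield.extendScalars hE).val.toLinearMap ?_
      exact hli)
    exact this
  · intro H
    let b := Module.Basis.ofVectorSpace C (Subfield.extendScalars hE)
    refine IntermediateField.LinearDisjoint.of_basis_left b ?_
    refine H _ _ (fun i => (b i).2) ?_
    exact b.linearIndependent.map' (Subfield.extendScalars hE).val.toLinearMap
      (LinearMap.ker_eq_bot.2 Subtype.val_injective)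

theorem ldo_symm {C E F : Subfield K} (h : LinearDisjointOver C E F) :
    LinearDisjointOver C F E := Submodule.LinearDisjoint.symm h

theorem LD.symm {C E F : Subfield K} (hE : C ≤ E) (hF : C ≤ F) (h : LD C E F) :
    LD C F E :=
  (ldo_iff hF hE).1 (ldo_symm ((ldo_iff hE hF).2 h))

theorem li_mono {F F' : Subfield K} (h : F' ≤ F) {ι : Type*} {e : ι → K}
    (H : LinearIndependent F e) : LinearIndependent F' e := by
  rw [linearIndependent_iff'] at H ⊢
  intro s g hg i hi
  have := H s (fun i => ⟨g i, h (g i).2⟩) hg i hi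
  exact Subtype.ext (congrArg (fun t : F => (t : K)) this)

theorem LD.mono {C E F E' F' : Subfield K} (hE : E' ≤ E) (hF : F' ≤ F)
    (h : LD C E F) : LD C E' F' :=
  fun ι e he hli => li_mono hF (h ι e (fun i => hE (he i)) hli)

theorem LD.trans {C D E G : Subfield K} (h : LD C E D)
    (h' : LD D E G) : LD C E G :=
  fun ι e he hli => h' ι e he (h ι e he hli)

theorem mem_adjoin_span {C D E : Subfield K} (hCD : C ≤ D)
    {J : Type*} (e : J → K) (he : (E : Set K) ⊆ Submodule.span C (Set.range e))
    {x : K} (hx : x ∈ Subring.closure ((E : Set K) ∪ D)) :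
    x ∈ Submodule.span D (Set.range e) := by
  have h1 : Subring.closure ((E : Set K) ∪ D) ≤ (Algebra.adjoin D (E : Set K)).toSubring := by
    rw [Subring.closure_le]
    rintro y (hy | hy)
    · exact Algebra.subset_adjoin hy
    · exact (Algebra.adjoin D (E : Set K)).algebraMap_mem ⟨y, hy⟩
  have h2 : x ∈ Subalgebra.toSubmodule (Algebra.adjoin D (E : Set K)) := h1 hx
  rw [Algebra.adjoin_eq_span] at h2
  have h3 : ((Submonoid.closure (E : Set K) : Submonoid K) : Set K) = E := by
    have := Submonoid.closure_eq (E.toSubring.toSubmonoid)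
    exact congrArg (fun s : Submonoid K => (s : Set K)) this
  rw [h3] at h2
  refine (Submodule.span_le.2 ?_) h2
  intro y hy
  have := he hy
  refine Submodule.span_induction (p := fun z _ => z ∈ Submodule.span D (Set.range e))
    ?_ ?_ ?_ ?_ this
  · intro z hz
    exact Submodule.subset_span hz
  · exact zero_mem _
  · intro a b _ _ ha hb
    exact add_mem ha hb
  · intro a z _ hz
    exact Submodule.smul_mem _ (⟨a.1, hCD a.2⟩ : D) hz

/-- Base change. -/
theorem LD.base {C D E F : Subfield K} (hCE : C ≤ E) (hCD : C ≤ D) (hDF : D ≤ F)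
    (h : LD C E F) : LD D F (E ⊔ D) := by
  intro ι f hf hli
  let b := Module.Basis.ofVectorSpace C (Subfield.extendScalars hCE)
  let e : _ → K := fun j => (b j : K)
  have hb1 : LinearIndependent C e := b.linearIndependent.map'
    (Subfield.extendScalars hCE).val.toLinearMap
      (LinearMap.ker_eq_bot.2 Subtype.val_injective)
  have hb2 : LinearIndependent F e := h _ _ (fun i => (b i).2) hb1
  have hspan : (E : Set K) ⊆ Submodule.span C (Set.range e) := by
    intro x hx
    have h1 := b.mem_span (⟨x, hx⟩ : Subfield.extendScalars hCE)
    have h2 := Submodule.mem_map_of_mem (f := (Subfield.extendScalars hCE).val.toLinearMap) h1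
    rw [Submodule.map_span, ← Set.range_comp] at h2
    exact h2
  rw [linearIndependent_iff']
  intro s g hg
  have hfrac : ∀ i, ∃ y ∈ Subring.closure ((E : Set K) ∪ D),
      ∃ z ∈ Subring.closure ((E : Set K) ∪ D), z ≠ 0 ∧ (g i : K) * z = y := by
    intro i
    have hcl : E ⊔ D = Subfield.closure ((E : Set K) ∪ D) := by
      rw [Subfield.closure_union, Subfield.closure_eq, Subfield.closure_eq]
    have := hcl.le (g i).2
    rw [Subfield.mem_closure_iff] at this
    obtain ⟨y, hy, z, hz, hyz⟩ := this
    by_cases h0 : z = 0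
    · refine ⟨0, zero_mem _, 1, one_mem _, one_ne_zero, ?_⟩
      rw [← hyz, h0]; simp
    · refine ⟨y, hy, z, hz, h0, ?_⟩
      rw [← hyz]; field_simp
  choose y hy z hz hz0 hyz using hfrac
  classical
  let w := ∏ i ∈ s, z i
  have hw0 : w ≠ 0 := Finset.prod_ne_zero_iff.2 (fun i _ => hz0 i)
  have hmem : ∀ i, ∃ c : _ →₀ D, i ∈ s → Finsupp.linearCombination D e c = (g i : K) * w := by
    intro i
    by_cases hi : i ∈ s
    · have : (g i : K) * w ∈ Submodule.span D (Set.range e) := by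
        apply mem_adjoin_span hCD e hspan
        have : (g i : K) * w = y i * ∏ j ∈ s.erase i, z j := by
          rw [← hyz i, mul_assoc, Finset.mul_prod_erase s z hi]
        rw [this]
        exact mul_mem (hy i) (prod_mem fun j _ => hz j)
      rw [Finsupp.mem_span_range_iff_exists_finsupp] at this
      obtain ⟨c, hc⟩ := this
      exact ⟨c, fun _ => hc⟩
    · exact ⟨0, fun h => absurd h hi⟩
  choose c hc using hmem
  let inc : D →+* F := Subfield.inclusion hDF
  let cF : ι → _ →₀ F := fun i => (c i).mapRange inc (map_zero _)
  have hcF : ∀ i, Finsupp.linearCombination F e (cF i) = Finsupp.linearCombination D e (c i) := by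
    intro i
    simp only [cF]
    rw [Finsupp.linearCombination_apply, Finsupp.linearCombination_apply,
      Finsupp.sum_mapRange_index (by simp)]
    rfl
  have hzero : Finsupp.linearCombination F e (∑ i ∈ s, (⟨f i, hf i⟩ : F) • cF i) = 0 := by
    rw [map_sum]
    simp only [map_smul, hcF]
    rw [Finset.sum_congr rfl (g := fun i => (g i • f i) * w)]
    · rw [← Finset.sum_mul, hg, zero_mul]
    · intro i hi
      rw [hc i hi]
      change f i * ((g i : K) * w) = ((g i : K) * f i) * w
      ring
  have hz1 := (linearIndependent_iff.1 hb2) _ hzero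
  have hcz : ∀ i ∈ s, c i = 0 := by
    intro i hi
    ext j
    have h1 := DFunLike.congr_fun hz1 j
    rw [Finsupp.finsetSum_apply] at h1
    have h2 : ∑ i ∈ s, (c i j) • f i = 0 := by
      have h3 := congrArg (fun t : F => (t : K)) h1
      simp only [Finsupp.coe_zero, Pi.zero_apply, ZeroMemClass.coe_zero,
        AddSubmonoidClass.coe_finsetSum] at h3
      rw [← h3]
      refine Finset.sum_congr rfl fun i _ => ?_
      change (c i j : K) * f i = f i * (c i j : K)
      ring
    rw [linearIndependent_iff'.1 hli s (fun i => c i j) h2 i hi]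
    rfl
  intro i hi
  have h1 := hc i hi
  rw [hcz i hi, map_zero] at h1
  have := (mul_eq_zero.1 h1.symm).resolve_right hw0
  exact Subtype.ext this

end LDbasics

section Ultra
universe uK

theorem exists_algHom_of_finiteType {k R : Type*} [Field k] [IsAlgClosed k] [CommRing R]
    [Nontrivial R] [Algebra k R] [Algebra.FiniteType k R] : Nonempty (R →ₐ[k] k) := by
  obtain ⟨m, hm⟩ := Ideal.exists_maximal R
  let := Ideal.Quotient.field m
  have := finite_of_finite_type_of_isJacobsonRing k (R ⧸ m)
  have hb : Function.Bijective (algebraMap k (R ⧸ m)) :=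
    IsAlgClosed.algebraMap_bijective_of_isIntegral
  let e : k ≃ₐ[k] (R ⧸ m) := AlgEquiv.ofBijective (Algebra.ofId k (R ⧸ m)) hb
  exact ⟨e.symm.toAlgHom.comp (Ideal.Quotient.mkₐ k m)⟩

theorem exists_ext {K T Ω : Type*} [Field K] [CommRing T] [Field Ω] [IsAlgClosed Ω]
    (a : T →+* K) (b : T →+* Ω) (ha : Function.Injective a) (hb : Function.Injective b) :
    ∃ (N : Subfield K) (φ : N →+* Ω), (∀ x : K, IsAlgebraic N x → x ∈ N) ∧
      ∀ t, ∃ h : a t ∈ N, φ ⟨a t, h⟩ = b t := by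
  have hT : IsDomain T := ha.isDomain a
  let : Algebra T K := a.toAlgebra
  let : Algebra T Ω := b.toAlgebra
  have hTK : FaithfulSMul T K := (faithfulSMul_iff_algebraMap_injective T K).2 ha
  have hTO : FaithfulSMul T Ω := (faithfulSMul_iff_algebraMap_injective T Ω).2 hb
  let S := Subalgebra.algebraicClosure T K
  let N : Subfield K := { S.toSubring with
    inv_mem' := fun x hx => (IsAlgebraic.inv_iff).2 hx }
  let φ : S →ₐ[T] Ω := IsAlgClosed.lift
  refine ⟨N, φ.toRingHom, ?_, ?_⟩
  · intro x hx
    have h1 : IsAlgebraic S x := hx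
    exact h1.restrictScalars T
  · intro t
    exact ⟨isAlgebraic_algebraMap t, φ.commutes t⟩

theorem prod_inj {k L M E J : Type*} [Field k] [Field L] [Field M] [Field E] [Algebra k L]
    [Algebra k M] [Algebra k E] (f : L →ₐ[k] E) (g : M →ₐ[k] E) (b : Module.Basis J k L)
    (H : ∀ c : J →₀ M, (c.sum fun j m => g m * f (b j)) = 0 → c = 0) :
    Function.Injective (Algebra.TensorProduct.productMap g f) := by
  rw [injective_iff_map_eq_zero]
  intro x hx
  let B := Algebra.TensorProduct.basis M b
  have h1 : (B.repr x) = 0 := by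
    apply H
    rw [← hx]
    conv_rhs => rw [← B.linearCombination_repr x, Finsupp.linearCombination_apply, Finsupp.sum,
      map_sum]
    rw [Finsupp.sum]
    refine Finset.sum_congr rfl fun j _ => ?_
    rw [Algebra.TensorProduct.basis_apply, TensorProduct.smul_tmul']
    simp
  exact B.repr.map_eq_zero_iff.1 h1

variable {K : Type uK} [Field K] {ι : Type*} {Ω : Type*} [Field Ω]

/-- The image of functions with values in `D`. -/
def ustar (q : (ι → K) →+* Ω) (D : Subfield K) : Subfield Ω where
  carrier := {x | ∃ f : ι → K, (∀ i, f i ∈ D) ∧ q f = x}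
  mul_mem' := by
    rintro _ _ ⟨f, hf, rfl⟩ ⟨g, hg, rfl⟩
    exact ⟨f * g, fun i => mul_mem (hf i) (hg i), map_mul _ _ _⟩
  one_mem' := ⟨1, fun i => one_mem D, map_one _⟩
  add_mem' := by
    rintro _ _ ⟨f, hf, rfl⟩ ⟨g, hg, rfl⟩
    exact ⟨f + g, fun i => add_mem (hf i) (hg i), map_add _ _ _⟩
  zero_mem' := ⟨0, fun i => zero_mem D, map_zero _⟩
  neg_mem' := by
    rintro _ ⟨f, hf, rfl⟩
    exact ⟨-f, fun i => neg_mem (hf i), map_neg _ _⟩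
  inv_mem' := by
    rintro _ ⟨f, hf, rfl⟩
    refine ⟨f⁻¹, fun i => inv_mem (hf i), ?_⟩
    have h1 : f * f⁻¹ * f = f := by
      funext i
      by_cases h : f i = 0
      · simp [h]
      · simp [h]
    have h2 : f⁻¹ * f * f⁻¹ = f⁻¹ := by
      funext i
      by_cases h : f i = 0
      · simp [h]
      · simp [h]
    by_cases h0 : q f = 0
    · rw [← h2]
      simp [h0]
    · have h3 : q f * q f⁻¹ * q f = q f := by rw [← map_mul, ← map_mul, h1]
      have h4 : q f * q f⁻¹ = 1 := by
        apply mul_right_cancel₀ h0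
        rw [h3, one_mul]
      exact eq_inv_of_mul_eq_one_right h4

theorem ustar_mono (q : (ι → K) →+* Ω) {D D' : Subfield K} (h : D ≤ D') : ustar q D ≤ ustar q D' := by
  rintro _ ⟨f, hf, rfl⟩
  exact ⟨f, fun i => h (hf i), rfl⟩

theorem const_mem_ustar (q : (ι → K) →+* Ω) {D : Subfield K} {x : K} (h : x ∈ D) :
    q (fun _ => x) ∈ ustar q D := ⟨_, fun _ => h, rfl⟩

theorem ustar_closed [IsAlgClosed K] (q : (ι → K) →+* Ω) {D : Subfield K}
    (hD : ∀ x : K, IsAlgebraic D x → x ∈ D) : IsAlgClosed (ustar q D) := by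
  apply IsAlgClosed.of_exists_root
  intro p hp hirr
  have hn : p.natDegree ≠ 0 := (Polynomial.natDegree_pos_iff_degree_pos.2
    (Polynomial.degree_pos_of_irreducible hirr)).ne'
  have hco : ∀ j, ∃ f : ι → D, q (fun i => f i) = p.coeff j := by
    intro j
    obtain ⟨f, hf, h⟩ := (p.coeff j).2
    exact ⟨fun i => ⟨f i, hf i⟩, h⟩
  choose c hc using hco
  let n := p.natDegree
  let P : ι → Polynomial D := fun i =>
    Polynomial.X ^ n + ∑ j : Fin n, Polynomial.C (c j i) * Polynomial.X ^ (j : ℕ)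
  have hdeg : ∀ i, (∑ j : Fin n,
      Polynomial.C (c j i) * Polynomial.X ^ (j : ℕ)).degree < (n : WithBot ℕ) :=
    fun i => Polynomial.degree_sum_fin_lt _
  have hroot : ∀ i, ∃ r : K, r ∈ D ∧ r ^ n + ∑ j : Fin n, (c j i : K) * r ^ (j : ℕ) = 0 := by
    intro i
    have hPd : (P i).degree = n := by
      simp only [P]
      rw [Polynomial.degree_add_eq_left_of_degree_lt]
      · simp
      · simpa using hdeg i
    obtain ⟨r, hr⟩ := IsAlgClosed.exists_aeval_eq_zero K (P i) (by
      rw [hPd]; exact_mod_cast hn)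
    refine ⟨r, hD r ⟨P i, ?_, hr⟩, ?_⟩
    · intro h0
      rw [h0] at hPd
      simp at hPd
    · simp [P] at hr
      exact hr
  choose r hrD hr using hroot
  refine ⟨⟨q r, r, hrD, rfl⟩, ?_⟩
  apply Subtype.ext
  have h1 : (r ^ n + ∑ j : Fin n, (fun i => (c j i : K)) * r ^ (j : ℕ) : ι → K) = 0 := by
    funext i
    simpa using hr i
  have h2 := congrArg q h1
  simp only [map_add, map_pow, map_sum, map_mul, hc, map_zero] at h2
  rw [Polynomial.eval_eq_sum_range, Finset.sum_range_succ, hp.coeff_natDegree, one_mul,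
    Finset.sum_range]
  push_cast
  rw [add_comm]
  exact h2

theorem ustar_rel_closed [IsAlgClosed K] (q : (ι → K) →+* Ω) {D : Subfield K}
    (hD : ∀ x : K, IsAlgebraic D x → x ∈ D) {x : Ω} (hx : IsAlgebraic (ustar q D) x) :
    x ∈ ustar q D := by
  have := ustar_closed q hD
  have h1 : (algebraicClosure (ustar q D) Ω) = ⊥ :=
    IntermediateField.eq_bot_of_isAlgClosed_of_isAlgebraic _
  have h2 : x ∈ algebraicClosure (ustar q D) Ω := mem_algebraicClosure_iff.2 hx
  rw [h1, IntermediateField.mem_bot] at h2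
  obtain ⟨y, rfl⟩ := h2
  exact y.2

theorem ustar_li (q : (ι → K) →+* Ω) {D : Subfield K} {J : Type*} {e : J → K}
    (he : LinearIndependent D e) (s : Finset J) (x : J → Ω) (hx : ∀ j ∈ s, x j ∈ ustar q D)
    (h0 : ∑ j ∈ s, x j * q (fun _ => e j) = 0) : ∀ j ∈ s, x j = 0 := by
  have hco : ∀ j, ∃ f : ι → D, j ∈ s → q (fun i => f i) = x j := by
    intro j
    by_cases hj : j ∈ s
    · obtain ⟨f, hf, h⟩ := hx j hj
      exact ⟨fun i => ⟨f i, hf i⟩, fun _ => h⟩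
    · exact ⟨fun _ => 0, fun h => absurd h hj⟩
  choose f hf using hco
  let t : ι → K := ∑ j ∈ s, (fun i => (f j i : K)) * (fun _ => e j)
  have ht : q t = 0 := by
    rw [← h0]
    simp only [t, map_sum, map_mul]
    exact Finset.sum_congr rfl fun j hj => by rw [hf j hj]
  intro j hj
  have h1 : (fun i => (f j i : K)) = (fun i => (f j i : K)) * t⁻¹ * t := by
    funext i
    by_cases h : t i = 0
    · have h2 : ∑ j ∈ s, f j i • e j = 0 := by
        rw [← h]
        simp only [t, Finset.sum_apply]
        rfl
      have := linearIndependent_iff'.1 he s (fun j => f j i) h2 j hj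
      simp [this]
    · simp [h]
  rw [← hf j hj, h1, map_mul, ht, mul_zero]

theorem exists_ultra (k : Subfield K) [IsAlgClosed k] :
    ∃ (Ω : Type uK) (_ : Field Ω) (_ : IsAlgClosed Ω) (q : (Finset K → K) →+* Ω) (g : K →+* Ω),
      (∀ x, g x ∈ ustar q k) ∧ ∀ x ∈ k, g x = q (fun _ => x) := by
  have hψ : ∀ s : Finset K, Nonempty (Algebra.adjoin k (s : Set K) →ₐ[k] k) := by
    intro s
    have : Algebra.FiniteType k (Algebra.adjoin k (s : Set K)) :=
      (Subalgebra.fg_iff_finiteType _).1 (Subalgebra.fg_adjoin_finset s)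
    exact exists_algHom_of_finiteType
  let ψ := fun s => (hψ s).some
  classical
  let c : K → Finset K → K := fun x s =>
    if h : x ∈ Algebra.adjoin k (s : Set K) then (ψ s ⟨x, h⟩ : K) else 0
  have hc : ∀ (x : K) (s : Finset K) (h : x ∈ Algebra.adjoin k (s : Set K)), c x s = (ψ s ⟨x, h⟩ : K) :=
    fun x s h => dif_pos h
  have hev : ∀ x : K, ∀ᶠ s : Finset K in Filter.atTop, x ∈ Algebra.adjoin k (s : Set K) := by
    intro x
    filter_upwards [Filter.eventually_ge_atTop {x}] with s hs
    exact Algebra.subset_adjoin (by simpa using hs)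
  let N : Ideal (Finset K → K) :=
    { carrier := {f | ∀ᶠ s in Filter.atTop, f s = 0}
      add_mem' := by
        intro f g hf hg
        filter_upwards [hf, hg] with s h1 h2
        simp [h1, h2]
      zero_mem' := Filter.Eventually.of_forall fun _ => rfl
      smul_mem' := by
        intro a f hf
        filter_upwards [hf] with s h1
        simp [h1] }
  have hN : N ≠ ⊤ := by
    intro h
    have h1 : (1 : Finset K → K) ∈ N := by rw [h]; trivial
    obtain ⟨s, hs⟩ := Filter.Eventually.exists (f := Filter.atTop) h1
    simp at hs
  obtain ⟨m, hm, hNm⟩ := Ideal.exists_le_maximal N hN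
  let := Ideal.Quotient.field m
  let Q := (Finset K → K) ⧸ m
  let q : (Finset K → K) →+* AlgebraicClosure Q :=
    (algebraMap Q (AlgebraicClosure Q)).comp (Ideal.Quotient.mk m)
  have hq : ∀ f g : Finset K → K, (∀ᶠ s in Filter.atTop, f s = g s) → q f = q g := by
    intro f g h
    simp only [q, RingHom.comp_apply]
    congr 1
    rw [Ideal.Quotient.eq]
    apply hNm
    filter_upwards [h] with s hs
    simp [hs]
  let g : K →+* AlgebraicClosure Q :=
    { toFun := fun x => q (c x)
      map_one' := by
        rw [← map_one q]
        apply hq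
        filter_upwards [] with s
        rw [hc 1 s (one_mem _)]
        have : (⟨1, one_mem _⟩ : Algebra.adjoin k (s : Set K)) = 1 := rfl
        rw [this, map_one]; rfl
      map_zero' := by
        rw [← map_zero q]
        apply hq
        filter_upwards [] with s
        rw [hc 0 s (zero_mem _)]
        have : (⟨0, zero_mem _⟩ : Algebra.adjoin k (s : Set K)) = 0 := rfl
        rw [this, map_zero]; rfl
      map_mul' := by
        intro x y
        rw [← map_mul q]
        apply hq
        filter_upwards [hev x, hev y] with s hx hy
        rw [Pi.mul_apply, hc x s hx, hc y s hy, hc _ s (mul_mem hx hy)]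
        have : (⟨x * y, mul_mem hx hy⟩ : Algebra.adjoin k (s : Set K)) = ⟨x, hx⟩ * ⟨y, hy⟩ := rfl
        rw [this, map_mul]; rfl
      map_add' := by
        intro x y
        rw [← map_add q]
        apply hq
        filter_upwards [hev x, hev y] with s hx hy
        rw [Pi.add_apply, hc x s hx, hc y s hy, hc _ s (add_mem hx hy)]
        have : (⟨x + y, add_mem hx hy⟩ : Algebra.adjoin k (s : Set K)) = ⟨x, hx⟩ + ⟨y, hy⟩ := rfl
        rw [this, map_add]; rfl }
  refine ⟨AlgebraicClosure Q, inferInstance, inferInstance, q, g, ?_, ?_⟩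
  · intro x
    refine ⟨c x, fun s => ?_, rfl⟩
    simp only [c]
    split_ifs
    · exact Subtype.prop _
    · exact zero_mem _
  · intro x hx
    apply hq
    filter_upwards [] with s
    rw [hc x s ((Algebra.adjoin k (s : Set K)).algebraMap_mem ⟨x, hx⟩)]
    have := (ψ s).commutes ⟨x, hx⟩
    exact congrArg (fun t : k => (t : K)) this

end Ultra

section Key
universe uK
variable {K : Type uK} [Field K]

theorem isAlgClosed_of_rel [IsAlgClosed K] {k : Subfield K}
    (hk : ∀ x : K, IsAlgebraic k x → x ∈ k) : IsAlgClosed k := by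
  apply IsAlgClosed.of_exists_root
  intro p hp hirr
  obtain ⟨r, hr⟩ := IsAlgClosed.exists_aeval_eq_zero K p
    (Polynomial.degree_pos_of_irreducible hirr).ne'
  have hrk : r ∈ k := hk r ⟨p, hirr.ne_zero, hr⟩
  refine ⟨⟨r, hrk⟩, ?_⟩
  apply Subtype.ext
  exact (Polynomial.aeval_algebraMap_apply_eq_algebraMap_eval (A := K) (⟨r, hrk⟩ : k) p).symm.trans
    hr

theorem acf_key [IsAlgClosed K] {k L M : Subfield K} (hk : ∀ x : K, IsAlgebraic k x → x ∈ k)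
    (hkL : k ≤ L) (hkM : k ≤ M) (hLD : LD k L M) {X : Type*} (J : Set X) (D B : X → Subfield K)
    (hkD : ∀ v ∈ J, k ≤ D v) (hDL : ∀ v ∈ J, D v ≤ L)
    (hD : ∀ v ∈ J, ∀ x : K, IsAlgebraic (D v) x → x ∈ D v)
    (hB : ∀ v ∈ J, ∀ x ∈ B v, IsAlgebraic ↥(D v ⊔ M) x) :
    LD (⨆ v ∈ J, D v) L (⨆ v ∈ J, B v) := by
  have hkac := isAlgClosed_of_rel hk
  obtain ⟨Ω, _, _, q, g, hg, hgk⟩ := exists_ultra k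
  let : Algebra k Ω := (g.comp k.subtype).toAlgebra
  let L' := Subfield.extendScalars hkL
  let M' := Subfield.extendScalars hkM
  let fL : L' →ₐ[k] Ω :=
    { (q.comp (Pi.constRingHom (Finset K) K)).comp L'.val.toRingHom with
      commutes' := fun x => (hgk x.1 x.2).symm }
  let fM : M' →ₐ[k] Ω :=
    { g.comp M'.val.toRingHom with
      commutes' := fun x => rfl }
  let b := Module.Basis.ofVectorSpace k L'
  have hb1 : LinearIndependent k (fun j => (b j : K)) := b.linearIndependent.map'
    L'.val.toLinearMap (LinearMap.ker_eq_bot.2 Subtype.val_injective)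
  have hb2 : LinearIndependent M (fun j => (b j : K)) := hLD _ _ (fun i => (b i).2) hb1
  have hinjK : Function.Injective (Algebra.TensorProduct.productMap M'.val L'.val) := by
    apply prod_inj L'.val M'.val b
    intro c hc
    ext j
    by_cases hj : j ∈ c.support
    · have := linearIndependent_iff'.1 hb2 c.support (fun j => c j) hc j hj
      exact congrArg (fun t : M => (t : K)) this
    · rw [Finsupp.notMem_support_iff.1 hj]
      rfl
  have hinjO : Function.Injective (Algebra.TensorProduct.productMap fM fL) := by
    apply prod_inj fL fM b
    intro c hc
    ext j
    by_cases hj : j ∈ c.support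
    · have := ustar_li q hb1 c.support (fun j => fM (c j)) (fun j _ => hg _) hc j hj
      have h2 : c j = 0 := (map_eq_zero_iff fM fM.toRingHom.injective).1 this
      rw [h2]
      rfl
    · rw [Finsupp.notMem_support_iff.1 hj]
      rfl
  obtain ⟨N, φ, hN, hφ⟩ := exists_ext
    (Algebra.TensorProduct.productMap M'.val L'.val).toRingHom
    (Algebra.TensorProduct.productMap fM fL).toRingHom hinjK hinjO
  have hLN : ∀ x ∈ L, ∃ h : x ∈ N, φ ⟨x, h⟩ = q (fun _ => x) := by
    intro x hx
    obtain ⟨h, h'⟩ := hφ (TensorProduct.tmul k (1 : M') (⟨x, hx⟩ : L'))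
    have e1 : (Algebra.TensorProduct.productMap M'.val L'.val).toRingHom
        (TensorProduct.tmul k (1 : M') (⟨x, hx⟩ : L')) = x := by
      simp
    have e2 : (Algebra.TensorProduct.productMap fM fL).toRingHom
        (TensorProduct.tmul k (1 : M') (⟨x, hx⟩ : L')) = q (fun _ => x) := by
      simp
      rfl
    rw [e2] at h'
    refine ⟨e1 ▸ h, ?_⟩
    rw [← h']
    congr 1
    exact Subtype.ext e1.symm
  have hMN : ∀ x ∈ M, ∃ h : x ∈ N, φ ⟨x, h⟩ = g x := by
    intro x hx
    obtain ⟨h, h'⟩ := hφ (TensorProduct.tmul k (⟨x, hx⟩ : M') (1 : L'))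
    have e1 : (Algebra.TensorProduct.productMap M'.val L'.val).toRingHom
        (TensorProduct.tmul k (⟨x, hx⟩ : M') (1 : L')) = x := by
      simp
    have e2 : (Algebra.TensorProduct.productMap fM fL).toRingHom
        (TensorProduct.tmul k (⟨x, hx⟩ : M') (1 : L')) = g x := by
      simp
      rfl
    rw [e2] at h'
    refine ⟨e1 ▸ h, ?_⟩
    rw [← h']
    congr 1
    exact Subtype.ext e1.symm
  -- pullback of a starred field
  let P : Subfield K → Subfield K := fun E => ((ustar q E).comap φ).map N.subtype
  have hP : ∀ (E : Subfield K) (x : K), x ∈ P E ↔ ∃ h : x ∈ N, φ ⟨x, h⟩ ∈ ustar q E := by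
    intro E x
    simp only [P, Subfield.mem_map, Subfield.mem_comap]
    constructor
    · rintro ⟨y, hy, rfl⟩
      exact ⟨y.2, hy⟩
    · rintro ⟨h, h'⟩
      exact ⟨⟨x, h⟩, h', rfl⟩
  have hPN : ∀ E, P E ≤ N := fun E x hx => ((hP E x).1 hx).1
  have hBP : ∀ v ∈ J, B v ≤ P (D v) := by
    intro v hv x hx
    have hle : D v ⊔ M ≤ P (D v) := by
      apply sup_le
      · intro y hy
        obtain ⟨h, h'⟩ := hLN y (hDL v hv hy)
        exact (hP _ _).2 ⟨h, h' ▸ const_mem_ustar q hy⟩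
      · intro y hy
        obtain ⟨h, h'⟩ := hMN y hy
        exact (hP _ _).2 ⟨h, h' ▸ ustar_mono q (hkD v hv) (hg y)⟩
    obtain ⟨p, hp0, hpx⟩ := hB v hv x hx
    have hxN : x ∈ N := by
      apply hN
      refine ⟨p.map (Subfield.inclusion (hle.trans (hPN _))), ?_, ?_⟩
      · exact (Polynomial.map_ne_zero_iff (RingHom.injective _)).2 hp0
      · rw [Polynomial.aeval_def, Polynomial.eval₂_map]
        exact hpx
    refine (hP _ _).2 ⟨hxN, ?_⟩
    apply ustar_rel_closed q (hD v hv)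
    let θ : ↥(D v ⊔ M) →+* ustar q (D v) :=
      (φ.comp (Subfield.inclusion (hle.trans (hPN _)))).codRestrict (ustar q (D v))
        (fun y => ((hP _ _).1 (hle y.2)).2)
    refine ⟨p.map θ, (Polynomial.map_ne_zero_iff (RingHom.injective _)).2 hp0, ?_⟩
    rw [Polynomial.aeval_def, Polynomial.eval₂_map]
    have h1 : (algebraMap (ustar q (D v)) Ω).comp θ =
        φ.comp (Subfield.inclusion (hle.trans (hPN _))) := rfl
    rw [h1, ← Polynomial.hom_eval₂]
    have h2 : Polynomial.eval₂ (Subfield.inclusion (hle.trans (hPN _))) ⟨x, hxN⟩ p = 0 := by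
      apply Subtype.ext
      have := Polynomial.hom_eval₂ p (Subfield.inclusion (hle.trans (hPN _))) N.subtype ⟨x, hxN⟩
      exact this.trans hpx
    rw [h2, map_zero]
  have hle : (⨆ v ∈ J, B v) ≤ P (⨆ v ∈ J, D v) := by
    refine iSup₂_le fun v hv => (hBP v hv).trans ?_
    intro x hx
    obtain ⟨h, h'⟩ := (hP _ _).1 hx
    exact (hP _ _).2 ⟨h, ustar_mono q (le_iSup₂_of_le v hv le_rfl) h'⟩
  intro ι e he hli
  rw [linearIndependent_iff']
  intro s c hc j hj
  have hcN : ∀ i, ∃ h : (c i : K) ∈ N, φ ⟨c i, h⟩ ∈ ustar q (⨆ v ∈ J, D v) :=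
    fun i => (hP _ _).1 (hle (c i).2)
  choose hcN1 hcN2 using hcN
  choose heN heφ using fun i => hLN (e i) (he i)
  have hsum : ∑ i ∈ s, (⟨c i, hcN1 i⟩ : N) * ⟨e i, heN i⟩ = 0 := by
    apply Subtype.ext
    rw [AddSubmonoidClass.coe_finsetSum]
    exact hc
  have hsum2 := congrArg φ hsum
  rw [map_sum, map_zero] at hsum2
  simp only [map_mul, heφ] at hsum2
  have h0 := ustar_li q hli s (fun i => φ ⟨c i, hcN1 i⟩) (fun i _ => hcN2 i) hsum2 j hj
  have h1 := (map_eq_zero_iff φ φ.injective).1 h0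
  exact Subtype.ext (congrArg (fun t : N => (t : K)) h1)

end Key

section Main
universe uK
variable {K : Type uK} [Field K]

theorem isAlg_mono {E F : Subfield K} (h : E ≤ F) {x : K} (hx : IsAlgebraic E x) :
    IsAlgebraic F x := by
  obtain ⟨p, hp0, hpx⟩ := hx
  refine ⟨p.map (Subfield.inclusion h), ?_, ?_⟩
  · exact (Polynomial.map_ne_zero_iff (RingHom.injective _)).2 hp0
  · rw [Polynomial.aeval_def, Polynomial.eval₂_map]
    exact hpx

theorem algCl_eq (E : Subfield K) : algCl E = (algebraicClosure E K).toSubfield := by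
  apply le_antisymm
  · unfold algCl
    rw [Subfield.closure_le]
    intro x hx
    exact mem_algebraicClosure_iff.2 hx
  · intro x hx
    exact Subfield.subset_closure (mem_algebraicClosure_iff.1 hx)

theorem mem_algCl {E : Subfield K} {x : K} : x ∈ algCl E ↔ IsAlgebraic E x := by
  rw [algCl_eq]
  exact mem_algebraicClosure_iff

theorem le_algCl (E : Subfield K) : E ≤ algCl E := fun x hx =>
  mem_algCl.2 (isAlgebraic_algebraMap (⟨x, hx⟩ : E))

theorem algCl_mono {E F : Subfield K} (h : E ≤ F) : algCl E ≤ algCl F := fun _ hx =>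
  mem_algCl.2 (isAlg_mono h (mem_algCl.1 hx))

theorem algCl_closed {E : Subfield K} {x : K} (h : IsAlgebraic (algCl E) x) : x ∈ algCl E := by
  rw [mem_algCl]
  have h' : IsAlgebraic (algebraicClosure E K) x :=
    isAlg_mono (F := (algebraicClosure E K).toSubfield) (algCl_eq E).le h
  exact h'.restrictScalars E

theorem algCl_le {E F : Subfield K} (h : E ≤ algCl F) : algCl E ≤ algCl F := fun _ hx =>
  algCl_closed (isAlg_mono h (mem_algCl.1 hx))

theorem le_invCl (σ : K ≃+* K) (E : Subfield K) : E ≤ invCl σ E :=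
  le_sInf fun _ hF => hF.1

variable {σ : K ≃+* K} {V : Type*} [Fintype V] [DecidableEq V] {A : Subfield K}

theorem invCl_eq (hA : A.map (σ : K →+* K) = A) : invCl σ A = A := by
  apply le_antisymm _ (le_invCl σ A)
  refine sInf_le ⟨le_rfl, ?_, ?_⟩
  · intro x hx
    rw [← hA]
    exact ⟨x, hx, rfl⟩
  · intro x hx
    rw [← hA] at hx
    obtain ⟨y, hy, rfl⟩ := hx
    simpa using hy

theorem galois_alg {F E : Subfield K} (h : IsFiniteGaloisExt F E) : E ≤ algCl F := by
  obtain ⟨hle, hfin, -⟩ := h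
  intro x hx
  rw [mem_algCl]
  let : Algebra F E := (Subfield.inclusion hle).toAlgebra
  obtain ⟨p, hp0, hpx⟩ := Algebra.IsAlgebraic.isAlgebraic (R := F) (⟨x, hx⟩ : E)
  refine ⟨p, hp0, ?_⟩
  have h1 := congrArg E.subtype hpx
  rw [Polynomial.aeval_def, Polynomial.hom_eval₂, map_zero] at h1
  exact h1

namespace DiffFieldSystem

theorem A_le (𝒮 : DiffFieldSystem σ V A) (v : Finset V) : A ≤ 𝒮.S v :=
  𝒮.empty_eq.symm.le.trans (𝒮.mono (Finset.empty_subset v))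

theorem S_le (𝒮 : DiffFieldSystem σ V A) (v : Finset V) :
    𝒮.S v ≤ algCl (A ⊔ ⨆ i ∈ v, 𝒮.S {i}) := by
  induction v using Finset.strongInduction with
  | H v ih =>
    rcases Nat.lt_or_ge v.card 2 with h | h
    · have : v.card = 0 ∨ v.card = 1 := by omega
      rcases this with h | h
      · rw [Finset.card_eq_zero] at h
        subst h
        rw [𝒮.empty_eq]
        exact le_sup_left.trans (le_algCl _)
      · obtain ⟨i, rfl⟩ := Finset.card_eq_one.1 h
        refine le_trans ?_ (le_algCl _)
        refine le_trans ?_ le_sup_right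
        exact le_iSup₂_of_le i (Finset.mem_singleton_self i) le_rfl
    · refine (galois_alg (𝒮.galois v h)).trans (algCl_le ?_)
      refine iSup₂_le fun t ht => ?_
      rw [Finset.mem_erase, Finset.mem_powerset] at ht
      refine (ih t (Finset.ssubset_iff_subset_ne.2 ⟨ht.2, ht.1⟩)).trans (algCl_mono ?_)
      refine sup_le_sup_left ?_ A
      exact iSup₂_le fun i hi => le_iSup₂_of_le i (ht.2 hi) le_rfl

theorem indep_LD (𝒮 : DiffFieldSystem σ V A) (hA : A.map (σ : K →+* K) = A) (w : Finset V) :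
    LD (algCl A) (algCl (𝒮.S w)) (algCl (𝒮.S wᶜ)) := by
  have h := 𝒮.indep w wᶜ disjoint_compl_right
  unfold IndependentOver at h
  rw [invCl_eq hA] at h
  have hle : ∀ E : Subfield K, E ≤ invCl σ (E ⊔ A) := fun E => le_sup_left.trans (le_invCl _ _)
  have hAle : ∀ E : Subfield K, A ≤ invCl σ (E ⊔ A) := fun E => le_sup_right.trans (le_invCl _ _)
  rw [ldo_iff (algCl_mono (hAle _)) (algCl_mono (hAle _))] at h
  refine h.mono ?_ ?_
  · exact algCl_le ((𝒮.S_le w).trans (algCl_mono (hle _)))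
  · exact algCl_le ((𝒮.S_le wᶜ).trans (algCl_mono (hle _)))

theorem Sminus_le (𝒮 : DiffFieldSystem σ V A) (w : Finset V) : 𝒮.Sminus w ≤ 𝒮.S w := by
  refine iSup₂_le fun t ht => ?_
  rw [Finset.mem_erase, Finset.mem_powerset] at ht
  exact 𝒮.mono ht.2

theorem step [IsAlgClosed K] (𝒮 : DiffFieldSystem σ V A) (hA : A.map (σ : K →+* K) = A)
    (hreg : 𝒮.Regular) (J : Set (Finset V)) (hJ : ∀ v ∈ J, ∀ t ⊆ v, t ∈ J) (w : Finset V)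
    (hw : w ∉ J) (hw0 : w ≠ ∅) :
    LD (𝒮.Sminus w) (𝒮.S w) (⨆ v ∈ J, algCl (𝒮.S v)) := by
  have h1 : LD (⨆ v ∈ J, algCl (𝒮.S (v ∩ w))) (algCl (𝒮.S w)) (⨆ v ∈ J, algCl (𝒮.S v)) := by
    refine acf_key (k := algCl A) (M := algCl (𝒮.S wᶜ)) (fun x hx => algCl_closed hx)
      (algCl_mono (𝒮.A_le w)) (algCl_mono (𝒮.A_le _)) (𝒮.indep_LD hA w) J _ _ ?_ ?_ ?_ ?_
    · exact fun v _ => algCl_mono (𝒮.A_le _)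
    · exact fun v _ => algCl_mono (𝒮.mono Finset.inter_subset_right)
    · exact fun v _ x hx => algCl_closed hx
    · intro v _ x hx
      rw [← mem_algCl]
      refine (algCl_le ((𝒮.S_le v).trans (algCl_mono (sup_le ?_ (iSup₂_le ?_))))) hx
      · exact ((𝒮.A_le _).trans (le_algCl _)).trans le_sup_left
      · intro i hi
        by_cases hiw : i ∈ w
        · refine le_trans ?_ le_sup_left
          refine le_trans (𝒮.mono ?_) (le_algCl _)
          simp [hi, hiw]
        · refine le_trans ?_ le_sup_right
          refine le_trans (𝒮.mono ?_) (le_algCl _)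
          simp [hiw]
  have h2 : LD (𝒮.Sminus w) (𝒮.S w) (⨆ v ∈ w.powerset.erase w, algCl (𝒮.S v)) := by
    refine (ldo_iff (𝒮.Sminus_le w) ?_).1 (hreg w hw0)
    exact iSup₂_mono fun v _ => le_algCl _
  have h3 : (⨆ v ∈ J, algCl (𝒮.S (v ∩ w))) ≤ ⨆ v ∈ w.powerset.erase w, algCl (𝒮.S v) := by
    refine iSup₂_le fun v hv => ?_
    have hm : v ∩ w ∈ w.powerset.erase w := by
      rw [Finset.mem_erase, Finset.mem_powerset]
      refine ⟨fun h => hw (hJ v hv w ?_), Finset.inter_subset_right⟩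
      exact Finset.inter_eq_right.1 h
    exact le_iSup₂_of_le (v ∩ w) hm le_rfl
  exact (h2.mono le_rfl h3).trans (h1.mono (le_algCl _) le_rfl)

theorem chain [IsAlgClosed K] (𝒮 : DiffFieldSystem σ V A) (hA : A.map (σ : K →+* K) = A)
    (hreg : 𝒮.Regular) (u : Finset V) (I : Set (Finset V)) (hI : ∀ v ∈ I, ∀ t ⊆ v, t ∈ I)
    (hI0 : ∅ ∈ I) (n : ℕ) : ∀ J : Set (Finset V), (∀ v ∈ J, ∀ t ⊆ v, t ∈ J) → I ⊆ J →
      (∀ v ∈ J, v ∉ I → v ⊆ u) → (J \ I).ncard = n →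
      LD (⨆ v ∈ {v | v ∈ I ∧ v ⊆ u}, 𝒮.S v) (⨆ v ∈ I, algCl (𝒮.S v))
        (⨆ v ∈ {v | v ∈ J ∧ v ⊆ u}, 𝒮.S v) := by
  induction n with
  | zero =>
    intro J _ hIJ _ hn
    have h1 : J \ I = ∅ := (Set.ncard_eq_zero (Set.toFinite _)).1 hn
    have h2 : J = I := Set.Subset.antisymm (Set.diff_eq_empty.1 h1) hIJ
    rw [h2]
    exact fun _ _ _ h => h
  | succ n ih =>
    intro J hJ hIJ hJu hn
    have hne : (J \ I).Nonempty := by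
      rw [← Set.ncard_pos (Set.toFinite _)]
      omega
    obtain ⟨w, hw, hmax⟩ := Set.exists_max_image (J \ I) Finset.card (Set.toFinite _) hne
    have hJ' : ∀ v ∈ J \ {w}, ∀ t ⊆ v, t ∈ J \ {w} := by
      rintro v ⟨hv, hvw⟩ t ht
      refine ⟨hJ v hv t ht, ?_⟩
      rintro rfl
      by_cases hvI : v ∈ I
      · exact hw.2 (hI v hvI t ht)
      · exact hvw (Finset.eq_of_subset_of_card_le ht (hmax v ⟨hv, hvI⟩)).symm
    have hIJ' : I ⊆ J \ {w} := fun v hv => ⟨hIJ hv, fun h => hw.2 (h ▸ hv)⟩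
    have hcard : ((J \ {w}) \ I).ncard = n := by
      have : (J \ {w}) \ I = (J \ I) \ {w} := by
        ext v; simp; tauto
      rw [this, Set.ncard_diff_singleton_of_mem hw, hn]
      rfl
    have h1 := ih (J \ {w}) hJ' hIJ' (fun v hv => hJu v hv.1) hcard
    have hwu : w ⊆ u := hJu w hw.1 hw.2
    have hw0 : w ≠ ∅ := fun h => hw.2 (h ▸ hI0)
    have h2 := 𝒮.step hA hreg (J \ {w}) hJ' w (fun h => h.2 rfl) hw0
    have hminus : 𝒮.Sminus w ≤ ⨆ v ∈ {v | v ∈ J \ {w} ∧ v ⊆ u}, 𝒮.S v := by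
      refine iSup₂_le fun t ht => ?_
      rw [Finset.mem_erase, Finset.mem_powerset] at ht
      exact le_iSup₂_of_le t ⟨⟨hJ w hw.1 t ht.2, ht.1⟩, ht.2.trans hwu⟩ le_rfl
    have h3 := h2.base (D := ⨆ v ∈ {v | v ∈ J \ {w} ∧ v ⊆ u}, 𝒮.S v) (𝒮.Sminus_le w) hminus
      (iSup₂_le fun v hv => le_iSup₂_of_le v hv.1 (le_algCl _))
    refine h1.trans (h3.mono ?_ ?_)
    · exact iSup₂_le fun v hv => le_iSup₂_of_le v (hIJ' hv) le_rfl
    · refine iSup₂_le fun v hv => ?_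
      by_cases hvw : v = w
      · rw [hvw]; exact le_sup_left
      · exact le_trans (le_iSup₂_of_le v ⟨⟨hv.1, hvw⟩, hv.2⟩ le_rfl) le_sup_right

end DiffFieldSystem

end Main

/-- (Third linear disjointness lemma for regular systems.) If `𝒮`
is a regular system of difference fields on `V` over `A`, `u ⊆ V` and `I` is
any collection of subsets of `V`, then `S(u)` is linearly disjoint from
`∏_{v ∈ I} S(v)^{alg}` over `∏_{v ∈ I_u} S(v)`. -/
theorem regular_third_linear_disjointness
    {K : Type*} [Field K] [IsAlgClosed K] (σ : K ≃+* K)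
    {V : Type*} [Fintype V] [DecidableEq V]
    (A : Subfield K) (hAperf : PerfectField A) (hAinv : A.map (σ : K →+* K) = A)
    (𝒮 : DiffFieldSystem σ V A) (hreg : 𝒮.Regular)
    (u : Finset V) (I : Set (Finset V)) :
    LinearDisjointOver
      (⨆ v ∈ interFamily I u, 𝒮.S v)
      (𝒮.S u)
      (⨆ v ∈ I, algCl (𝒮.S v)) := by
  rcases I.eq_empty_or_nonempty with rfl | ⟨v₀, hv₀⟩
  · have h1 : (⨆ v ∈ interFamily (∅ : Set (Finset V)) u, 𝒮.S v) = ⊥ := by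
      simp [interFamily]
    have h2 : (⨆ v ∈ (∅ : Set (Finset V)), algCl (𝒮.S v)) = ⊥ := by simp
    rw [h1, h2, ldo_iff bot_le le_rfl]
    exact fun _ _ _ h => h
  let I' : Set (Finset V) := {v | ∃ v' ∈ I, v ⊆ v'}
  have hI' : ∀ v ∈ I', ∀ t ⊆ v, t ∈ I' := by
    rintro v ⟨v', hv', hvv⟩ t ht
    exact ⟨v', hv', ht.trans hvv⟩
  have hF : (⨆ v ∈ {v | v ∈ I' ∧ v ⊆ u}, 𝒮.S v) = ⨆ v ∈ interFamily I u, 𝒮.S v := by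
    apply le_antisymm
    · refine iSup₂_le fun v hv => ?_
      obtain ⟨⟨v', hv', hvv⟩, hvu⟩ := hv
      exact le_iSup₂_of_le (v' ∩ u) ⟨v', hv', rfl⟩ (𝒮.mono (Finset.subset_inter hvv hvu))
    · refine iSup₂_le fun v hv => ?_
      obtain ⟨v', hv', rfl⟩ := hv
      exact le_iSup₂_of_le (v' ∩ u)
        ⟨⟨v', hv', Finset.inter_subset_left⟩, Finset.inter_subset_right⟩ le_rfl
  have hG : (⨆ v ∈ I, algCl (𝒮.S v)) ≤ ⨆ v ∈ I', algCl (𝒮.S v) :=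
    iSup₂_le fun v hv => le_iSup₂_of_le v ⟨v, hv, subset_rfl⟩ le_rfl
  have h1 := 𝒮.chain hAinv hreg u I' hI' ⟨v₀, hv₀, Finset.empty_subset _⟩ _
    (I' ∪ {v | v ⊆ u}) (by
      rintro v (hv | hv) t ht
      · exact Or.inl (hI' v hv t ht)
      · exact Or.inr (ht.trans hv)) Set.subset_union_left (by
      rintro v (hv | hv) hn
      · exact absurd hv hn
      · exact hv) rfl
  rw [hF] at h1
  have h2 := h1.mono (E' := ⨆ v ∈ I, algCl (𝒮.S v)) (F' := 𝒮.S u) hG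
    (le_iSup₂_of_le u ⟨Or.inr (subset_refl u), subset_rfl⟩ le_rfl)
  have hE : (⨆ v ∈ interFamily I u, 𝒮.S v) ≤ 𝒮.S u := by
    refine iSup₂_le fun v hv => ?_
    obtain ⟨v', hv', rfl⟩ := hv
    exact 𝒮.mono Finset.inter_subset_right
  have hE2 : (⨆ v ∈ interFamily I u, 𝒮.S v) ≤ ⨆ v ∈ I, algCl (𝒮.S v) := by
    refine iSup₂_le fun v hv => ?_
    obtain ⟨v', hv', rfl⟩ := hv
    exact le_iSup₂_of_le v' hv' ((𝒮.mono Finset.inter_subset_left).trans (le_algCl _))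
  exact ldo_symm ((ldo_iff hE2 hE).2 h2)
end

section
/- Let J be an antichain on V consisting of sets of size at least 2 with ⋃J = V, and let I = {v : ∃u∈J, v ⊆ u} be the simplicial complex generated by J. Let S be a regular I-system of difference fields on V over A. For each u ∈ J let τ_u : S(u) → S(u) be a ring homomorphism with τ_u = σ on S(u)^- = ∏_{v∈P(u)^-} S(v). Then there exists a ring homomorphism τ from the compositum ∏_{u∈J} S(u) · ∏_{v∈I\J} S(v)^{alg} to K such that τ restricts to τ_u on S(u) for every u ∈ J and τ = σ on ∏_{v∈I\J} S(v)^{alg}; in particular the τ_u admit a common extension to S(V). (The Claim in the proof of the Stochastic Independence Theorem.) -/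
namespace SIC
universe u v
open scoped TensorProduct

section LinDisj
variable {K : Type u} [Field K]

/-- Linear disjointness through linearly independent families. -/
def LI (C E F : Subfield K) : Prop :=
  ∀ (ι : Type u) (e : ι → K), (∀ i, e i ∈ E) → LinearIndependent C e → LinearIndependent F e

lemma span_eq {C E : Subfield K} (hE : C ≤ E) :
    Submodule.span C (E : Set K) =
      Subalgebra.toSubmodule (Subfield.extendScalars hE).toSubalgebra := by
  apply le_antisymm
  · rw [Submodule.span_le]
    intro x hx
    exact hx
  · intro x hx
    exact Submodule.subset_span hx

lemma ld_iff {C E F : Subfield K} (hE : C ≤ E) (hF : C ≤ F) :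
    LinearDisjointOver C E F ↔
      (Subfield.extendScalars hE).toSubalgebra.LinearDisjoint
        (Subfield.extendScalars hF).toSubalgebra := by
  unfold LinearDisjointOver
  rw [span_eq hE, span_eq hF]

lemma li_of_ld {C E F : Subfield K} (hE : C ≤ E) (hF : C ≤ F)
    (h : LinearDisjointOver C E F) : LI C E F := by
  intro ι e he hli
  rw [ld_iff hE hF] at h
  have h1 : LinearIndependent C (fun i => (⟨e i, he i⟩ : (Subfield.extendScalars hE).toSubalgebra)) :=
    LinearIndependent.of_comp (Subfield.extendScalars hE).toSubalgebra.val.toLinearMap hli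
  have h2 := h.linearIndependent_left_of_flat h1
  exact h2

lemma ld_of_li {C E F : Subfield K} (hE : C ≤ E) (hF : C ≤ F)
    (h : LI C E F) : LinearDisjointOver C E F := by
  rw [ld_iff hE hF]
  let b := Module.Basis.ofVectorSpace C (Subfield.extendScalars hE).toSubalgebra
  refine Subalgebra.LinearDisjoint.of_basis_left _ _ b ?_
  exact h _ (fun i => (b i : K)) (fun i => (b i).2)
    (b.linearIndependent.map' (Subfield.extendScalars hE).toSubalgebra.val.toLinearMap
      (LinearMap.ker_eq_bot.2 Subtype.val_injective))

lemma tensorHom {M : Type v} [Field M] {C E F : Subfield K} (hE : C ≤ E) (hF : C ≤ F)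
    (f : E →+* M) (g : F →+* M)
    (hfg : ∀ c : C, f ⟨c, hE c.2⟩ = g ⟨c, hF c.2⟩) :
    ∃ h : ((Subfield.extendScalars hE).toSubalgebra ⊗[C]
        (Subfield.extendScalars hF).toSubalgebra) →+* M,
      ∀ x y, h (x ⊗ₜ y) = f ⟨x.1, x.2⟩ * g ⟨y.1, y.2⟩ := by
  let : Algebra C M := (f.comp (Subfield.inclusion hE)).toAlgebra
  let f' : (Subfield.extendScalars hE).toSubalgebra →ₐ[C] M :=
    { toFun := fun x => f ⟨x.1, x.2⟩
      map_one' := f.map_one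
      map_zero' := f.map_zero
      map_mul' := fun x y => f.map_mul ⟨x.1, x.2⟩ ⟨y.1, y.2⟩
      map_add' := fun x y => f.map_add ⟨x.1, x.2⟩ ⟨y.1, y.2⟩
      commutes' := fun c => rfl }
  let g' : (Subfield.extendScalars hF).toSubalgebra →ₐ[C] M :=
    { toFun := fun x => g ⟨x.1, x.2⟩
      map_one' := g.map_one
      map_zero' := g.map_zero
      map_mul' := fun x y => g.map_mul ⟨x.1, x.2⟩ ⟨y.1, y.2⟩
      map_add' := fun x y => g.map_add ⟨x.1, x.2⟩ ⟨y.1, y.2⟩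
      commutes' := fun c => (hfg c).symm }
  refine ⟨(Algebra.TensorProduct.lift f' g' (fun _ _ => Commute.all _ _)).toRingHom, ?_⟩
  intro x y
  exact Algebra.TensorProduct.lift_tmul _ _ _ _ _

/-- Gluing homomorphisms on linearly disjoint fields. -/
lemma glue {M : Type v} [Field M] {C E F : Subfield K} (hE : C ≤ E) (hF : C ≤ F)
    (hLI : LI C E F) (halg : ∀ x ∈ E, IsAlgebraic C x)
    (f : E →+* M) (g : F →+* M)
    (hfg : ∀ c : C, f ⟨c, hE c.2⟩ = g ⟨c, hF c.2⟩) :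
    ∃ h : ↥(E ⊔ F) →+* M,
      (∀ x (hx : x ∈ E), h ⟨x, (le_sup_left : E ≤ E ⊔ F) hx⟩ = f ⟨x, hx⟩) ∧
      (∀ x (hx : x ∈ F), h ⟨x, (le_sup_right : F ≤ E ⊔ F) hx⟩ = g ⟨x, hx⟩) := by
  have hld := (ld_iff hE hF).1 (ld_of_li hE hF hLI)
  obtain ⟨h, hh⟩ := tensorHom hE hF f g hfg
  let Φ := Subalgebra.LinearDisjoint.mulMap hld
  have : Algebra.IsAlgebraic C (Subfield.extendScalars hE) := by
    constructor
    intro x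
    rw [← isAlgebraic_algebraMap_iff (A := K) (FaithfulSMul.algebraMap_injective _ _)]
    exact halg x.1 x.2
  have hsup := IntermediateField.sup_toSubalgebra_of_isAlgebraic_left
    (Subfield.extendScalars hE) (Subfield.extendScalars hF)
  have hle : E ⊔ F ≤ (Subfield.extendScalars hE ⊔ Subfield.extendScalars hF).toSubfield := by
    refine sup_le ?_ ?_
    · exact (le_sup_left : Subfield.extendScalars hE ≤ Subfield.extendScalars hE ⊔ Subfield.extendScalars hF)
    · exact (le_sup_right : Subfield.extendScalars hF ≤ Subfield.extendScalars hE ⊔ Subfield.extendScalars hF)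
  have hmem : ∀ x ∈ E ⊔ F, x ∈ (Subfield.extendScalars hE).toSubalgebra ⊔
      (Subfield.extendScalars hF).toSubalgebra := by
    intro x hx
    rw [← hsup]
    exact hle hx
  let ι : ↥(E ⊔ F) →+* ↥((Subfield.extendScalars hE).toSubalgebra ⊔
      (Subfield.extendScalars hF).toSubalgebra) :=
    { toFun := fun x => ⟨x.1, hmem x.1 x.2⟩
      map_one' := rfl
      map_zero' := rfl
      map_mul' := fun _ _ => rfl
      map_add' := fun _ _ => rfl }
  refine ⟨h.comp ((Φ.symm : _ →+* _).comp ι), ?_, ?_⟩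
  · intro x hx
    have : Φ.symm (ι ⟨x, (le_sup_left : E ≤ E ⊔ F) hx⟩) =
        (⟨x, hx⟩ : (Subfield.extendScalars hE).toSubalgebra) ⊗ₜ 1 := by
      rw [AlgEquiv.symm_apply_eq]
      apply Subtype.ext
      rw [Subalgebra.LinearDisjoint.val_mulMap_tmul]
      simp [ι]
    change h (Φ.symm (ι _)) = _
    rw [this, hh]
    have : g ⟨((1 : (Subfield.extendScalars hF).toSubalgebra) : K), Subtype.property _⟩ = 1 := g.map_one
    rw [this, mul_one]
  · intro x hx
    have : Φ.symm (ι ⟨x, (le_sup_right : F ≤ E ⊔ F) hx⟩) =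
        1 ⊗ₜ (⟨x, hx⟩ : (Subfield.extendScalars hF).toSubalgebra) := by
      rw [AlgEquiv.symm_apply_eq]
      apply Subtype.ext
      rw [Subalgebra.LinearDisjoint.val_mulMap_tmul]
      simp [ι]
    change h (Φ.symm (ι _)) = _
    rw [this, hh]
    have : f ⟨((1 : (Subfield.extendScalars hE).toSubalgebra) : K), Subtype.property _⟩ = 1 := f.map_one
    rw [this, one_mul]

end LinDisj
end SIC

namespace SIC
universe u v w
open scoped TensorProduct
open Filter

/-- `E` is relatively algebraically closed in `K`. -/
def RelClosed {K : Type u} [Field K] (E : Subfield K) : Prop := ∀ x : K, IsAlgebraic E x → x ∈ E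

section Germs
variable {K : Type u} [Field K] {ι : Type v} (U : Ultrafilter ι)

/-- The ultrapower of a subfield inside the ultrapower of the field. -/
def star (E : Subfield K) : Subfield (Germ (U : Filter ι) K) where
  carrier := {g | ∃ r : ι → K, (∀ t, r t ∈ E) ∧ g = (r : Germ (U : Filter ι) K)}
  mul_mem' := by
    rintro _ _ ⟨r, hr, rfl⟩ ⟨s, hs, rfl⟩
    exact ⟨r * s, fun t => E.mul_mem (hr t) (hs t), rfl⟩
  add_mem' := by
    rintro _ _ ⟨r, hr, rfl⟩ ⟨s, hs, rfl⟩
    exact ⟨r + s, fun t => E.add_mem (hr t) (hs t), rfl⟩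
  one_mem' := ⟨1, fun t => E.one_mem, rfl⟩
  zero_mem' := ⟨0, fun t => E.zero_mem, rfl⟩
  neg_mem' := by
    rintro _ ⟨r, hr, rfl⟩
    exact ⟨-r, fun t => E.neg_mem (hr t), rfl⟩
  inv_mem' := by
    rintro _ ⟨r, hr, rfl⟩
    exact ⟨r⁻¹, fun t => E.inv_mem (hr t), rfl⟩

variable {U}

lemma star_mono {E F : Subfield K} (h : E ≤ F) : star U E ≤ star U F := by
  rintro _ ⟨r, hr, rfl⟩
  exact ⟨r, fun t => h (hr t), rfl⟩

lemma ofFun_sum {κ : Type w} (s : Finset κ) (f : κ → ι → K) :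
    (((fun t => ∑ i ∈ s, f i t) : ι → K) : Germ (U : Filter ι) K)
      = ∑ i ∈ s, ((f i : ι → K) : Germ (U : Filter ι) K) := by
  have := map_sum (Germ.coeRingHom (R := K) (U : Filter ι)) f s
  rw [Germ.coe_coeRingHom] at this
  rw [← this]
  congr 1
  ext t
  simp

variable (U) in
/-- The diagonal embedding. -/
def diag : K →+* Germ (U : Filter ι) K :=
  (Germ.coeRingHom (R := K) (U : Filter ι)).comp (Pi.constRingHom ι K)

lemma diag_apply (x : K) : diag U x = ((fun _ => x : ι → K) : Germ (U : Filter ι) K) := rfl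

lemma diag_mem_star {E : Subfield K} {x : K} (hx : x ∈ E) : diag U x ∈ star U E :=
  ⟨fun _ => x, fun _ => hx, rfl⟩

lemma star_li {E : Subfield K} {κ : Type w} {f : κ → K} (hf : LinearIndependent E f) :
    LinearIndependent (star U E) (fun i => diag U (f i)) := by
  rw [linearIndependent_iff'] at hf ⊢
  intro s g hg i hi
  have hr : ∀ j, ∃ r : ι → K, (∀ t, r t ∈ E) ∧ (g j : Germ (U : Filter ι) K) = r := fun j => (g j).2
  choose r hrE hrg using hr
  have h1 : (((fun t => ∑ j ∈ s, r j t * f j) : ι → K) : Germ (U : Filter ι) K) =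
      ((fun _ => 0 : ι → K) : Germ (U : Filter ι) K) := by
    rw [ofFun_sum s (fun j t => r j t * f j)]
    change _ = 0
    rw [← hg]
    apply Finset.sum_congr rfl
    intro j _
    rw [Subfield.smul_def, hrg, diag_apply, smul_eq_mul]
    rfl
  rw [Germ.coe_eq] at h1
  apply Subtype.ext
  rw [hrg]
  change _ = ((fun _ => 0 : ι → K) : Germ (U : Filter ι) K)
  rw [Germ.coe_eq]
  filter_upwards [h1] with t ht
  have := hf s (fun j => ⟨r j t, hrE j t⟩) (by simpa [Subfield.smul_def] using ht) i hi
  simpa using congrArg Subtype.val this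

lemma star_relClosed {E : Subfield K} (hE : RelClosed E) : RelClosed (star U E) := by
  intro g hg
  obtain ⟨p, hp, hpg⟩ := hg
  have hr : ∀ j, ∃ r : ι → K, (∀ t, r t ∈ E) ∧ (p.coeff j : Germ (U : Filter ι) K) = r :=
    fun j => (p.coeff j).2
  choose r hrE hrg using hr
  induction g using Germ.inductionOn with | _ s => ?_
  have h1 : (((fun t => ∑ j ∈ Finset.range (p.natDegree + 1), r j t * s t ^ j) : ι → K) :
      Germ (U : Filter ι) K) = ((fun _ => 0 : ι → K) : Germ (U : Filter ι) K) := by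
    rw [ofFun_sum _ (fun j t => r j t * s t ^ j)]
    change _ = 0
    rw [← hpg, Polynomial.aeval_eq_sum_range]
    apply Finset.sum_congr rfl
    intro j _
    rw [Subfield.smul_def, hrg, smul_eq_mul]
    rfl
  rw [Germ.coe_eq] at h1
  have h2 : ∀ᶠ t in (U : Filter ι), r p.natDegree t ≠ 0 := by
    rw [Ultrafilter.eventually_not]
    intro h
    apply hp
    rw [← Polynomial.leadingCoeff_eq_zero]
    apply Subtype.ext
    rw [Polynomial.leadingCoeff, hrg]
    exact Germ.coe_eq.2 h
  have h3 : ∀ᶠ t in (U : Filter ι), s t ∈ E := by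
    filter_upwards [h1, h2] with t ht1 ht2
    apply hE
    refine ⟨∑ j ∈ Finset.range (p.natDegree + 1),
      Polynomial.monomial j (⟨r j t, hrE j t⟩ : E), ?_, ?_⟩
    · intro h0
      have := congrArg (fun q => Polynomial.coeff q p.natDegree) h0
      simp only [Polynomial.finsetSum_coeff, Polynomial.coeff_monomial, Polynomial.coeff_zero,
        Finset.sum_ite_eq', Finset.mem_range, Nat.lt_succ_self, if_true] at this
      exact ht2 (congrArg Subtype.val this)
    · rw [map_sum]
      simp only [Polynomial.aeval_monomial]
      exact ht1
  classical
  refine ⟨fun t => if s t ∈ E then s t else 0, ?_, ?_⟩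
  · intro t
    dsimp only
    split_ifs with h
    · exact h
    · exact E.zero_mem
  · rw [Germ.coe_eq]
    filter_upwards [h3] with t ht
    simp [ht]

instance germ_algClosed [IsAlgClosed K] : IsAlgClosed (Germ (U : Filter ι) K) := by
  apply IsAlgClosed.of_exists_root
  intro p hm hirr
  have hr : ∀ j, ∃ r : ι → K, p.coeff j = (r : Germ (U : Filter ι) K) := fun j =>
    Germ.inductionOn (p.coeff j) fun r => ⟨r, rfl⟩
  choose r hr using hr
  have hdeg : 0 < p.natDegree := hirr.natDegree_pos
  have hs : ∀ t, ∃ x : K, x ^ p.natDegree + ∑ j ∈ Finset.range p.natDegree, r j t * x ^ j = 0 := by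
    intro t
    let q : Polynomial K := ∑ j ∈ Finset.range p.natDegree, Polynomial.C (r j t) * Polynomial.X ^ j
    have hq : q.degree < p.natDegree := by
      refine lt_of_le_of_lt (Polynomial.degree_sum_le _ _) ?_
      rw [Finset.sup_lt_iff (by exact_mod_cast WithBot.bot_lt_coe _)]
      intro j hj
      refine lt_of_le_of_lt (Polynomial.degree_C_mul_X_pow_le _ _) ?_
      exact_mod_cast Finset.mem_range.1 hj
    have hd : (Polynomial.X ^ p.natDegree + q).degree = (p.natDegree : WithBot ℕ) := by
      rw [Polynomial.degree_add_eq_left_of_degree_lt] <;> simp [hq]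
    obtain ⟨x, hx⟩ := IsAlgClosed.exists_root (Polynomial.X ^ p.natDegree + q) (by
      rw [hd]
      exact_mod_cast hdeg.ne')
    refine ⟨x, ?_⟩
    simpa [q, Polynomial.IsRoot, Polynomial.eval_finsetSum] using hx
  choose s hs using hs
  refine ⟨(s : Germ (U : Filter ι) K), ?_⟩
  rw [Polynomial.eval_eq_sum_range, Finset.sum_range_succ, hm.coeff_natDegree, one_mul]
  have h1 : ((fun t => s t ^ p.natDegree + ∑ j ∈ Finset.range p.natDegree, r j t * s t ^ j : ι → K) :
      Germ (U : Filter ι) K) = 0 := by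
    apply Germ.coe_eq.2
    exact Filter.Eventually.of_forall hs
  rw [← h1]
  have h2 := ofFun_sum (U := U) (Finset.range p.natDegree) (fun j t => r j t * s t ^ j)
  have h3 : ((fun t => s t ^ p.natDegree + ∑ j ∈ Finset.range p.natDegree, r j t * s t ^ j : ι → K) :
      Germ (U : Filter ι) K) = (s : Germ (U : Filter ι) K) ^ p.natDegree +
      ((fun t => ∑ j ∈ Finset.range p.natDegree, r j t * s t ^ j : ι → K) : Germ (U : Filter ι) K) := rfl
  rw [h3, h2, add_comm]
  congr 1
  apply Finset.sum_congr rfl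
  intro j _
  rw [hr]
  rfl

end Germs

section Points

/-- Weak Nullstellensatz: finitely generated algebras have points. -/
lemma exists_point {k : Type u} [Field k] [IsAlgClosed k] {R : Type v} [CommRing R] [Nontrivial R]
    [Algebra k R] [Algebra.FiniteType k R] : Nonempty (R →ₐ[k] k) := by
  obtain ⟨m, hm⟩ := Ideal.exists_maximal R
  let := Ideal.Quotient.field m
  have := finite_of_finite_type_of_isJacobsonRing k (R ⧸ m)
  exact ⟨(IsAlgClosed.lift : (R ⧸ m) →ₐ[k] k).comp (Ideal.Quotient.mkₐ k m)⟩

/-- A field extension of an algebraically closed field embeds into an ultrapower. -/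
lemma exists_embed {K : Type u} [Field K] (k : Subfield K) [IsAlgClosed k]
    (Q : Subfield K) (hk : k ≤ Q) :
    ∃ (U : Ultrafilter (Finset K)) (φ : Q →+* Germ (U : Filter (Finset K)) K),
      (∀ x : k, φ ⟨x, hk x.2⟩ = diag U (x : K)) ∧ ∀ q, φ q ∈ star U k := by
  classical
  let U : Ultrafilter (Finset K) := Ultrafilter.of atTop
  have hU : (U : Filter (Finset K)) ≤ atTop := Ultrafilter.of_le _
  let R : Finset K → Subalgebra k K := fun T => Algebra.adjoin k (T : Set K)
  have hfg : ∀ T, Algebra.FiniteType k (R T) := fun T =>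
    (R T).fg_iff_finiteType.1 ⟨T, rfl⟩
  have hpt : ∀ T, Nonempty (R T →ₐ[k] k) := fun T => by
    have := hfg T
    exact exists_point
  let θ : ∀ T, R T →ₐ[k] k := fun T => Classical.choice (hpt T)
  let r : K → Finset K → K := fun x T => if h : x ∈ R T then ((θ T ⟨x, h⟩ : k) : K) else 0
  have hr : ∀ x T (h : x ∈ R T), r x T = ((θ T ⟨x, h⟩ : k) : K) := fun x T h => dif_pos h
  have hrk : ∀ x T, r x T ∈ k := by
    intro x T
    simp only [r]
    split_ifs
    · exact Subtype.property _
    · exact k.zero_mem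
  have hev : ∀ x : K, ∀ᶠ T in (U : Filter (Finset K)), x ∈ R T := by
    intro x
    apply hU
    filter_upwards [eventually_ge_atTop {x}] with T hT
    exact Algebra.subset_adjoin (hT (by simp))
  have hc : ∀ (c : k) T, r c T = c := by
    intro c T
    have h : (c : K) ∈ R T := (R T).algebraMap_mem c
    rw [hr _ _ h]
    have : (⟨(c : K), h⟩ : R T) = algebraMap k (R T) c := rfl
    rw [this, (θ T).commutes]
    rfl
  let φ : K →+* Germ (U : Filter (Finset K)) K :=
    { toFun := fun x => (r x : Germ (U : Filter (Finset K)) K)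
      map_one' := by
        apply Germ.coe_eq.2
        refine Filter.Eventually.of_forall fun T => ?_
        simpa using hc 1 T
      map_zero' := by
        apply Germ.coe_eq.2
        refine Filter.Eventually.of_forall fun T => ?_
        simpa using hc 0 T
      map_mul' := fun x y => by
        apply Germ.coe_eq.2
        filter_upwards [hev x, hev y] with T hx hy
        have h := (R T).mul_mem hx hy
        change r (x * y) T = r x T * r y T
        rw [hr _ _ hx, hr _ _ hy, hr _ _ h, ← Subfield.coe_mul, ← map_mul]
        rfl
      map_add' := fun x y => by
        apply Germ.coe_eq.2
        filter_upwards [hev x, hev y] with T hx hy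
        have h := (R T).add_mem hx hy
        change r (x + y) T = r x T + r y T
        rw [hr _ _ hx, hr _ _ hy, hr _ _ h, ← Subfield.coe_add, ← map_add]
        rfl }
  refine ⟨U, φ.comp Q.subtype, ?_, ?_⟩
  · intro x
    apply Germ.coe_eq.2
    exact Filter.Eventually.of_forall fun T => hc x T
  · intro q
    exact ⟨r q, hrk q, rfl⟩

end Points
end SIC

namespace SIC
universe u v w
open scoped TensorProduct
open Filter

section Key

lemma tensor_inj {K : Type u} [Field K] {M : Type v} [Field M] {C E F : Subfield K}
    (hE : C ≤ E) (hF : C ≤ F) (f : E →+* M) (g : F →+* M)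
    (h : ((Subfield.extendScalars hE).toSubalgebra ⊗[C]
        (Subfield.extendScalars hF).toSubalgebra) →+* M)
    (hh : ∀ x y, h (x ⊗ₜ y) = f ⟨x.1, x.2⟩ * g ⟨y.1, y.2⟩)
    (G : Subfield M) (hg : ∀ y, g y ∈ G)
    (hli : ∀ (κ : Type u) (e : κ → E), LinearIndependent C (fun i => (e i : K)) →
      LinearIndependent G (fun i => f (e i))) : Function.Injective h := by
  rw [injective_iff_map_eq_zero]
  intro x hx
  let b := Module.Basis.ofVectorSpace C (Subfield.extendScalars hE).toSubalgebra
  obtain ⟨c, rfl⟩ := TensorProduct.eq_repr_basis_left b x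
  have hb := hli _ (fun i => (⟨(b i).1, (b i).2⟩ : E))
    (b.linearIndependent.map' (Subfield.extendScalars hE).toSubalgebra.val.toLinearMap
      (LinearMap.ker_eq_bot.2 Subtype.val_injective))
  rw [linearIndependent_iff'] at hb
  have h0 : ∑ i ∈ c.support, (⟨g ⟨(c i).1, (c i).2⟩, hg _⟩ : G) • f ⟨(b i).1, (b i).2⟩ = 0 := by
    rw [← hx, Finsupp.sum, map_sum]
    apply Finset.sum_congr rfl
    intro i _
    rw [hh, Subfield.smul_def, smul_eq_mul, mul_comm]
  have h1 := hb _ _ h0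
  rw [Finsupp.sum]
  apply Finset.sum_eq_zero
  intro i hi
  have h2 : g ⟨(c i).1, (c i).2⟩ = 0 := congrArg Subtype.val (h1 i hi)
  rw [map_eq_zero] at h2
  have h3 : c i = 0 := Subtype.ext (congrArg Subtype.val h2)
  rw [h3, TensorProduct.tmul_zero]

lemma extend_closed {K : Type u} [Field K] {M : Type v} [Field M] [IsAlgClosed M]
    {R : Type w} [CommRing R] (i : R →+* K) (j : R →+* M)
    (hi : Function.Injective i) (hj : Function.Injective j) :
    ∃ (T : Subfield K) (ψ : T →+* M), RelClosed T ∧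
      ∃ h : ∀ r, i r ∈ T, ∀ r, ψ ⟨i r, h r⟩ = j r := by
  have : IsDomain R := hi.isDomain i
  let : Algebra R K := i.toAlgebra
  let : Algebra R M := j.toAlgebra
  let S := Subalgebra.algebraicClosure R K
  have tS : Module.IsTorsionFree R S := by
    rw [Module.isTorsionFree_iff_algebraMap_injective]
    intro a b hab
    exact hi (congrArg Subtype.val hab)
  have tM : Module.IsTorsionFree R M := by
    rw [Module.isTorsionFree_iff_algebraMap_injective]
    exact hj
  let ψ0 : S →ₐ[R] M := IsAlgClosed.lift
  let T : Subfield K :=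
    { S.toSubring with
      inv_mem' := fun x hx => IsAlgebraic.inv hx }
  let ψ : T →+* M :=
    { toFun := fun x => ψ0 ⟨x.1, x.2⟩
      map_one' := map_one ψ0
      map_zero' := map_zero ψ0
      map_mul' := fun x y => map_mul ψ0 ⟨x.1, x.2⟩ ⟨y.1, y.2⟩
      map_add' := fun x y => map_add ψ0 ⟨x.1, x.2⟩ ⟨y.1, y.2⟩ }
  refine ⟨T, ψ, ?_, fun r => S.algebraMap_mem r, fun r => ψ0.commutes r⟩
  intro x hx
  let f : T →+* S :=
    { toFun := fun x => ⟨x.1, x.2⟩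
      map_one' := rfl
      map_zero' := rfl
      map_mul' := fun _ _ => rfl
      map_add' := fun _ _ => rfl }
  have h1 : IsAlgebraic S x := hx.ringHom_of_comp_eq f (RingHom.id K)
    (fun a b hab => Subtype.ext (congrArg (fun z : S => (z : K)) hab)) rfl
  exact h1.restrictScalars R

lemma algClosed_of_relClosed {K : Type u} [Field K] [IsAlgClosed K] {k : Subfield K}
    (hk : RelClosed k) : IsAlgClosed k := by
  apply IsAlgClosed.of_exists_root
  intro p hm hirr
  obtain ⟨x, hx⟩ := IsAlgClosed.exists_aeval_eq_zero K p hirr.degree_pos.ne'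
  refine ⟨⟨x, hk x ⟨p, hm.ne_zero, hx⟩⟩, ?_⟩
  apply Subtype.val_injective
  have : ((p.eval ⟨x, hk x ⟨p, hm.ne_zero, hx⟩⟩ : k) : K) = Polynomial.aeval x p := by
    have := Polynomial.aeval_algebraMap_apply K (⟨x, hk x ⟨p, hm.ne_zero, hx⟩⟩ : k) p
    rw [Polynomial.coe_aeval_eq_eval] at this
    exact this.symm
  rw [this, hx]
  rfl

/-- Jointly embedding two linearly disjoint fields and extending to a closed field. -/
lemma key_aux {K : Type u} [Field K] {M : Type v} [Field M] [IsAlgClosed M] {k P Q : Subfield K}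
    (hP : k ≤ P) (hQ : k ≤ Q) (hLI : LI k P Q) (f : P →+* M) (g : Q →+* M)
    (hfg : ∀ c : k, f ⟨c, hP c.2⟩ = g ⟨c, hQ c.2⟩)
    (G : Subfield M) (hg : ∀ y, g y ∈ G)
    (hli : ∀ (κ : Type u) (e : κ → P), LinearIndependent k (fun i => (e i : K)) →
      LinearIndependent G (fun i => f (e i))) :
    ∃ (T : Subfield K) (ψ : T →+* M), RelClosed T ∧
      (∃ h : P ≤ T, ∀ x (hx : x ∈ P), ψ ⟨x, h hx⟩ = f ⟨x, hx⟩) ∧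
      (∃ h : Q ≤ T, ∀ x (hx : x ∈ Q), ψ ⟨x, h hx⟩ = g ⟨x, hx⟩) := by
  obtain ⟨i, hi⟩ := tensorHom hP hQ P.subtype Q.subtype (fun c => rfl)
  obtain ⟨j, hj⟩ := tensorHom hP hQ f g hfg
  have iinj : Function.Injective i := tensor_inj hP hQ P.subtype Q.subtype i hi Q (fun y => y.2)
    (fun κ e he => hLI κ _ (fun i => (e i).2) he)
  have jinj : Function.Injective j := tensor_inj hP hQ f g j hj G hg hli
  obtain ⟨T, ψ, hT, h, hψ⟩ := extend_closed
    (R := (Subfield.extendScalars hP).toSubalgebra ⊗[k] (Subfield.extendScalars hQ).toSubalgebra)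
    i j iinj jinj
  have iP : ∀ x (hx : x ∈ P), i ((⟨x, hx⟩ : (Subfield.extendScalars hP).toSubalgebra) ⊗ₜ 1) = x := by
    intro x hx
    rw [hi]
    simp
  have iQ : ∀ x (hx : x ∈ Q), i (1 ⊗ₜ (⟨x, hx⟩ : (Subfield.extendScalars hQ).toSubalgebra)) = x := by
    intro x hx
    rw [hi]
    simp
  refine ⟨T, ψ, hT, ⟨fun x hx => iP x hx ▸ h _, ?_⟩, ⟨fun x hx => iQ x hx ▸ h _, ?_⟩⟩
  · intro x hx
    have h1 := hψ ((⟨x, hx⟩ : (Subfield.extendScalars hP).toSubalgebra) ⊗ₜ 1)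
    rw [hj] at h1
    have h2 : g ⟨((1 : (Subfield.extendScalars hQ).toSubalgebra) : K), Subtype.property _⟩ = 1 :=
      g.map_one
    rw [h2, mul_one] at h1
    simp only [iP] at h1
    exact h1
  · intro x hx
    have h1 := hψ (1 ⊗ₜ (⟨x, hx⟩ : (Subfield.extendScalars hQ).toSubalgebra))
    rw [hj] at h1
    have h2 : f ⟨((1 : (Subfield.extendScalars hP).toSubalgebra) : K), Subtype.property _⟩ = 1 :=
      f.map_one
    rw [h2, one_mul] at h1
    simp only [iQ] at h1
    exact h1

/-- Coheir embedding into an ultrapower. -/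
lemma key {K : Type u} [Field K] [IsAlgClosed K] {k P Q : Subfield K}
    (hP : k ≤ P) (hQ : k ≤ Q) (hk : RelClosed k) (hLI : LI k P Q) :
    ∃ (U : Ultrafilter (Finset K)) (T : Subfield K)
      (ψ : T →+* Germ (U : Filter (Finset K)) K), RelClosed T ∧
      (∃ h : P ≤ T, ∀ x (hx : x ∈ P), ψ ⟨x, h hx⟩ = diag U x) ∧
      (∃ h : Q ≤ T, ∀ x (hx : x ∈ Q), ψ ⟨x, h hx⟩ ∈ star U k) := by
  have := algClosed_of_relClosed hk
  obtain ⟨U, φ, hφ, hφs⟩ := exists_embed k Q hQ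
  obtain ⟨T, ψ, hT, ⟨h1, h1'⟩, ⟨h2, h2'⟩⟩ := key_aux hP hQ hLI ((diag U).comp P.subtype) φ
    (fun c => (hφ c).symm) (star U k) hφs (fun κ e he => star_li he)
  refine ⟨U, T, ψ, hT, ⟨h1, fun x hx => h1' x hx⟩, ⟨h2, fun x hx => ?_⟩⟩
  rw [h2' x hx]
  exact hφs _

end Key

section AlgCl
variable {K : Type u} [Field K]

lemma algCl_eq (E : Subfield K) : algCl E = (algebraicClosure E K).toSubfield := by
  apply le_antisymm
  · unfold algCl
    rw [Subfield.closure_le]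
    intro x hx
    exact mem_algebraicClosure_iff.2 hx
  · intro x hx
    exact Subfield.subset_closure (mem_algebraicClosure_iff.1 hx)

lemma mem_algCl {E : Subfield K} {x : K} : x ∈ algCl E ↔ IsAlgebraic E x := by
  rw [algCl_eq]
  exact mem_algebraicClosure_iff

lemma alg_mono {E F : Subfield K} (h : E ≤ F) {x : K} (hx : IsAlgebraic E x) : IsAlgebraic F x :=
  hx.ringHom_of_comp_eq (Subfield.inclusion h) (RingHom.id K) (RingHom.injective _) rfl

lemma le_algCl (E : Subfield K) : E ≤ algCl E := fun x hx =>
  mem_algCl.2 (isAlgebraic_algebraMap (⟨x, hx⟩ : E))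

lemma algCl_relClosed (E : Subfield K) : RelClosed (algCl E) := by
  intro x hx
  rw [mem_algCl]
  rw [algCl_eq] at hx
  have : IsAlgebraic (algebraicClosure E K) x := hx
  exact this.restrictScalars E

lemma algCl_le {E G : Subfield K} (h : E ≤ G) (hG : RelClosed G) : algCl E ≤ G := fun x hx =>
  hG x (alg_mono h (mem_algCl.1 hx))

lemma algCl_mono {E F : Subfield K} (h : E ≤ F) : algCl E ≤ algCl F :=
  algCl_le (h.trans (le_algCl F)) (algCl_relClosed F)

lemma le_invCl (σ : K ≃+* K) (E : Subfield K) : E ≤ invCl σ E :=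
  le_sInf fun _ hF => hF.1

lemma invCl_mono (σ : K ≃+* K) {E F : Subfield K} (h : E ≤ F) : invCl σ E ≤ invCl σ F :=
  le_sInf fun _ hG => sInf_le ⟨h.trans hG.1, hG.2⟩

lemma invCl_le (σ : K ≃+* K) {A : Subfield K} (hA : A.map (σ : K →+* K) = A) : invCl σ A ≤ A := by
  apply sInf_le
  refine ⟨le_rfl, ?_, ?_⟩
  · intro x hx
    rw [← hA]
    exact ⟨x, hx, rfl⟩
  · intro x hx
    rw [← hA] at hx
    obtain ⟨y, hy, rfl⟩ := hx
    simpa using hy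

end AlgCl

section System
variable {K : Type u} [Field K] {σ : K ≃+* K}
variable {V : Type v} [Fintype V] [DecidableEq V] {A : Subfield K}

lemma alg_Sminus (𝒮 : DiffFieldSystem σ V A) {u : Finset V} (hu : 2 ≤ u.card) {x : K}
    (hx : x ∈ 𝒮.S u) : IsAlgebraic (𝒮.Sminus u) x := by
  obtain ⟨h, hfin, -⟩ := 𝒮.galois u hu
  let : Algebra ↥(⨆ v ∈ u.powerset.erase u, 𝒮.S v) (𝒮.S u) := (Subfield.inclusion h).toAlgebra
  have h1 : IsAlgebraic ↥(⨆ v ∈ u.powerset.erase u, 𝒮.S v) (⟨x, hx⟩ : 𝒮.S u) :=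
    Algebra.IsAlgebraic.isAlgebraic _
  exact h1.ringHom_of_comp_eq (RingHom.id _) (𝒮.S u).subtype Function.injective_id rfl

lemma Sminus_le (𝒮 : DiffFieldSystem σ V A) (u : Finset V) : 𝒮.Sminus u ≤ 𝒮.S u := by
  refine iSup₂_le fun v hv => 𝒮.mono ?_
  exact Finset.mem_powerset.1 (Finset.mem_of_mem_erase hv)

lemma A_le (𝒮 : DiffFieldSystem σ V A) (u : Finset V) : A ≤ 𝒮.S u := by
  conv_lhs => rw [← 𝒮.empty_eq]
  exact 𝒮.mono (Finset.empty_subset _)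

lemma gen (𝒮 : DiffFieldSystem σ V A) {G : Subfield K} (hG : RelClosed G) (hA : A ≤ G)
    (w : Finset V) (hw : ∀ i ∈ w, 𝒮.S {i} ≤ G) : 𝒮.S w ≤ G := by
  induction w using Finset.strongInduction with
  | H w ih =>
    rcases Nat.lt_or_ge w.card 2 with hc | hc
    · rcases Nat.lt_or_ge w.card 1 with h0 | h1
      · have : w = ∅ := Finset.card_eq_zero.1 (by omega)
        rw [this, 𝒮.empty_eq]
        exact hA
      · obtain ⟨i, rfl⟩ := Finset.card_eq_one.1 (by omega : w.card = 1)
        exact hw i (by simp)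
    · have : 𝒮.Sminus w ≤ G := by
        refine iSup₂_le fun v hv => ?_
        have hv' : v ⊂ w := by
          rw [Finset.mem_erase, Finset.mem_powerset] at hv
          exact hv.2.ssubset_of_ne hv.1
        exact ih v hv' fun i hi => hw i (hv'.1 hi)
      intro x hx
      exact hG x (alg_mono this (alg_Sminus 𝒮 hc hx))

lemma main_LI [IsAlgClosed K] (hAinv : A.map (σ : K →+* K) = A) (𝒮 : DiffFieldSystem σ V A)
    (u : Finset V) (W : Set (Finset V)) :
    LI (⨆ w ∈ W, algCl (𝒮.S (w ∩ u))) (algCl (𝒮.S u)) (⨆ w ∈ W, algCl (𝒮.S w)) := by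
  have hind := 𝒮.indep u uᶜ disjoint_compl_right
  unfold IndependentOver at hind
  set k := algCl (invCl σ A) with hkdef
  set P := algCl (invCl σ ((A ⊔ ⨆ i ∈ u, 𝒮.S {i}) ⊔ A)) with hPdef
  set Q := algCl (invCl σ ((A ⊔ ⨆ i ∈ uᶜ, 𝒮.S {i}) ⊔ A)) with hQdef
  have hkP : k ≤ P := algCl_mono (invCl_mono σ le_sup_right)
  have hkQ : k ≤ Q := algCl_mono (invCl_mono σ le_sup_right)
  obtain ⟨U, T, ψ, hT, ⟨hPT, hψP⟩, ⟨hQT, hψQ⟩⟩ :=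
    key hkP hkQ (algCl_relClosed _) (li_of_ld hkP hkQ hind)
  have hk : ∀ v, k ≤ algCl (𝒮.S v) := fun v => algCl_mono ((invCl_le σ hAinv).trans (A_le 𝒮 v))
  have hSP : ∀ i ∈ u, 𝒮.S {i} ≤ P := fun i hi =>
    le_trans (le_trans (le_trans (le_iSup₂_of_le i hi le_rfl) le_sup_right) le_sup_left)
      ((le_invCl σ _).trans (le_algCl _))
  have hSQ : ∀ i ∈ uᶜ, 𝒮.S {i} ≤ Q := fun i hi =>
    le_trans (le_trans (le_trans (le_iSup₂_of_le i hi le_rfl) le_sup_right) le_sup_left)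
      ((le_invCl σ _).trans (le_algCl _))
  have hAP : A ≤ P := le_sup_right.trans ((le_invCl σ _).trans (le_algCl _))
  have huP : algCl (𝒮.S u) ≤ P :=
    algCl_le (gen 𝒮 (algCl_relClosed _) hAP u hSP) (algCl_relClosed _)
  -- pulled back ultrapowers of subfields
  have hpull : ∀ E : Subfield K, ∃ G : Subfield K, (∀ x, x ∈ G ↔ ∃ h : x ∈ T, ψ ⟨x, h⟩ ∈ star U E) ∧
      (RelClosed E → RelClosed G) := by
    intro E
    refine ⟨((star U E).comap ψ).map T.subtype, ?_, ?_⟩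
    · intro x
      constructor
      · rintro ⟨y, hy, rfl⟩
        exact ⟨y.2, hy⟩
      · rintro ⟨h, hx⟩
        exact ⟨⟨x, h⟩, hx, rfl⟩
    · intro hE x hx
      have hle : ((star U E).comap ψ).map T.subtype ≤ T := by
        rintro _ ⟨y, hy, rfl⟩
        exact y.2
      have hxT : x ∈ T := hT x (alg_mono hle hx)
      refine ⟨⟨x, hxT⟩, ?_, rfl⟩
      change ψ ⟨x, hxT⟩ ∈ star U E
      apply star_relClosed hE
      -- transport the algebraic relation
      have h1 : IsAlgebraic ((star U E).comap ψ) (⟨x, hxT⟩ : T) := by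
        let f : ((star U E).comap ψ) →+* (((star U E).comap ψ).map T.subtype) :=
          { toFun := fun y => ⟨T.subtype y.1, ⟨y.1, y.2, rfl⟩⟩
            map_one' := rfl
            map_zero' := rfl
            map_mul' := fun _ _ => rfl
            map_add' := fun _ _ => rfl }
        refine IsAlgebraic.of_ringHom_of_comp_eq f T.subtype (a := (⟨x, hxT⟩ : T)) hx ?_
          T.subtype.injective rfl
        rintro ⟨_, ⟨y, hy, rfl⟩⟩
        exact ⟨⟨y, hy⟩, rfl⟩
      let g : ((star U E).comap ψ) →+* star U E :=
        { toFun := fun y => ⟨ψ y.1, y.2⟩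
          map_one' := Subtype.ext (map_one ψ)
          map_zero' := Subtype.ext (map_zero ψ)
          map_mul' := fun _ _ => Subtype.ext (map_mul ψ _ _)
          map_add' := fun _ _ => Subtype.ext (map_add ψ _ _) }
      exact h1.ringHom_of_comp_eq g ψ g.injective rfl
  have hNw : ∀ w, ∀ x ∈ algCl (𝒮.S w), ∃ h : x ∈ T, ψ ⟨x, h⟩ ∈ star U (algCl (𝒮.S (w ∩ u))) := by
    intro w
    obtain ⟨G, hG, hGc⟩ := hpull (algCl (𝒮.S (w ∩ u)))
    have hGc := hGc (algCl_relClosed _)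
    have hPG : ∀ x, x ∈ P → x ∈ algCl (𝒮.S (w ∩ u)) → x ∈ G := by
      intro x hxP hx
      refine (hG x).2 ⟨hPT hxP, ?_⟩
      rw [hψP x hxP]
      exact diag_mem_star hx
    have hle : algCl (𝒮.S w) ≤ G := by
      refine algCl_le (gen 𝒮 hGc ?_ w ?_) hGc
      · intro x hx
        exact hPG x (hAP hx) (le_algCl _ (A_le 𝒮 _ hx))
      · intro i hi x hx
        by_cases hiu : i ∈ u
        · refine hPG x (hSP i hiu hx) (le_algCl _ (𝒮.mono ?_ hx))
          simp [hi, hiu]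
        · have hxQ := hSQ i (Finset.mem_compl.2 hiu) hx
          exact (hG x).2 ⟨hQT hxQ, star_mono (hk _) (hψQ x hxQ)⟩
    intro x hx
    exact (hG x).1 (hle hx)
  have hN : ∀ x ∈ (⨆ w ∈ W, algCl (𝒮.S w)),
      ∃ h : x ∈ T, ψ ⟨x, h⟩ ∈ star U (⨆ w ∈ W, algCl (𝒮.S (w ∩ u))) := by
    obtain ⟨G, hG, -⟩ := hpull (⨆ w ∈ W, algCl (𝒮.S (w ∩ u)))
    have hle : (⨆ w ∈ W, algCl (𝒮.S w)) ≤ G := by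
      refine iSup₂_le fun w hw x hx => ?_
      obtain ⟨h, h'⟩ := hNw w x hx
      exact (hG x).2 ⟨h, star_mono (le_iSup₂_of_le (f := fun w _ => algCl (𝒮.S (w ∩ u))) w hw le_rfl) h'⟩
    intro x hx
    exact (hG x).1 (hle hx)
  intro κ e he hli
  have hs := star_li (U := U) hli
  rw [linearIndependent_iff'] at hs ⊢
  intro s c hc i hi
  have hcT : ∀ j, (c j : K) ∈ T := fun j => (hN _ (c j).2).1
  have heT : ∀ j, e j ∈ T := fun j => hPT (huP (he j))
  have h0 : ∑ j ∈ s, (⟨c j, hcT j⟩ : T) * ⟨e j, heT j⟩ = 0 := by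
    apply Subtype.ext
    simpa [Subfield.smul_def] using hc
  have h1 := congrArg ψ h0
  rw [map_sum, map_zero] at h1
  have h2 := hs s (fun j => ⟨ψ ⟨c j, hcT j⟩, (hN _ (c j).2).2⟩) (by
    rw [← h1]
    apply Finset.sum_congr rfl
    intro j _
    rw [Subfield.smul_def, map_mul, hψP _ (huP (he j)), smul_eq_mul]) i hi
  have h3 : ψ ⟨c i, hcT i⟩ = 0 := congrArg Subtype.val h2
  rw [map_eq_zero] at h3
  have h4 : (c i : K) = 0 := congrArg (fun z : T => (z : K)) h3
  exact Subtype.ext h4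

end System
end SIC

namespace SIC
universe u v

lemma li_mono {K : Type u} [Field K] {N F : Subfield K} (h : N ≤ F) {κ : Type v} {e : κ → K}
    (he : LinearIndependent F e) : LinearIndependent N e := by
  rw [linearIndependent_iff'] at he ⊢
  intro s c hc i hi
  have := he s (fun j => ⟨c j, h (c j).2⟩) hc i hi
  exact Subtype.ext (congrArg (fun z : F => (z : K)) this)

end SIC

/-- (Claim in the proof of the Stochastic Independence Theorem.)
Let `J` be an antichain on `V` of sets of size `≥ 2` with `⋃J = V`, `I` the
simplicial complex generated by `J`, and `𝒮` a regular `I`-system. Given, for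
each `u ∈ J`, a ring homomorphism `τ_u : S(u) → S(u)` agreeing with `σ` on
`S(u)⁻`, there is a ring homomorphism `τ` on the compositum
`∏_{u∈J} S(u) · ∏_{v∈I\J} S(v)^{alg}` restricting to each `τ_u` and to `σ` on
`∏_{v∈I\J} S(v)^{alg}`; in particular the `τ_u` have a common extension to
`S(V)`. -/
theorem stochastic_independence_claim
    {K : Type*} [Field K] [IsAlgClosed K] (σ : K ≃+* K)
    {V : Type*} [Fintype V] [DecidableEq V]
    (A : Subfield K) (hAperf : PerfectField A) (hAinv : A.map (σ : K →+* K) = A)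
    (J : Finset (Finset V))
    (hJ2 : ∀ u ∈ J, 2 ≤ u.card)
    (hJanti : ∀ u ∈ J, ∀ v ∈ J, u ⊆ v → u = v)
    (hJcover : ∀ i : V, ∃ u ∈ J, i ∈ u)
    (𝒮 : DiffFieldSystem σ V A)
    (h𝒮 : 𝒮.IsOn {v : Finset V | ∃ u ∈ J, v ⊆ u})
    (hreg : 𝒮.Regular)
    (τ : (u : Finset V) → u ∈ J → (↥(𝒮.S u) →+* ↥(𝒮.S u)))
    (hτ : ∀ (u : Finset V) (hu : u ∈ J) (x : K) (hx : x ∈ 𝒮.S u),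
      x ∈ 𝒮.Sminus u → ((τ u hu ⟨x, hx⟩ : ↥(𝒮.S u)) : K) = σ x) :
    ∃ τ' : ↥((⨆ u ∈ J, 𝒮.S u) ⊔
        ⨆ v ∈ ({v : Finset V | ∃ u ∈ J, v ⊆ u} \ ↑J), algCl (𝒮.S v)) →+* K,
      (∀ (u : Finset V) (hu : u ∈ J) (x : K)
          (hxb : x ∈ (⨆ u ∈ J, 𝒮.S u) ⊔
            ⨆ v ∈ ({v : Finset V | ∃ u ∈ J, v ⊆ u} \ ↑J), algCl (𝒮.S v))
          (hxu : x ∈ 𝒮.S u),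
        τ' ⟨x, hxb⟩ = ((τ u hu ⟨x, hxu⟩ : ↥(𝒮.S u)) : K)) ∧
      (∀ (x : K)
          (hxb : x ∈ (⨆ u ∈ J, 𝒮.S u) ⊔
            ⨆ v ∈ ({v : Finset V | ∃ u ∈ J, v ⊆ u} \ ↑J), algCl (𝒮.S v)),
        x ∈ (⨆ v ∈ ({v : Finset V | ∃ u ∈ J, v ⊆ u} \ ↑J), algCl (𝒮.S v)) →
          τ' ⟨x, hxb⟩ = σ x) ∧
      ∃ τ'' : ↥(𝒮.S Finset.univ) →+* K,
        ∀ (u : Finset V) (hu : u ∈ J) (x : K)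
          (hxV : x ∈ 𝒮.S Finset.univ) (hxu : x ∈ 𝒮.S u),
          τ'' ⟨x, hxV⟩ = ((τ u hu ⟨x, hxu⟩ : ↥(𝒮.S u)) : K) := by
  let I : Set (Finset V) := {v : Finset V | ∃ u ∈ J, v ⊆ u}
  let M0 : Subfield K := ⨆ v ∈ (I \ ↑J), algCl (𝒮.S v)
  have hproper : ∀ u ∈ J, ∀ v, v ∈ u.powerset.erase u → v ∈ I \ ↑J := by
    intro u hu v hv
    rw [Finset.mem_erase, Finset.mem_powerset] at hv
    refine ⟨⟨u, hu, hv.2⟩, fun hvJ => hv.1 (hJanti v hvJ u hu hv.2)⟩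
  have hmin : ∀ u ∈ J, 𝒮.Sminus u ≤ M0 := by
    intro u hu
    refine iSup₂_le fun v hv => ?_
    exact (SIC.le_algCl _).trans
      (le_iSup₂_of_le (f := fun v (_ : v ∈ (I \ ↑J)) => algCl (𝒮.S v)) v (hproper u hu v hv) le_rfl)
  have step : ∀ J' : Finset (Finset V), J' ⊆ J →
      ∃ (N : Subfield K) (θ : N →+* K),
        N ≤ (⨆ w ∈ ((I \ ↑J) ∪ ↑J'), algCl (𝒮.S w)) ∧
        (∃ h : M0 ≤ N, ∀ x (hx : x ∈ M0), θ ⟨x, h hx⟩ = σ x) ∧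
        (∀ u (hu : u ∈ J), u ∈ J' → ∃ h : 𝒮.S u ≤ N, ∀ x (hx : x ∈ 𝒮.S u),
          θ ⟨x, h hx⟩ = ((τ u hu ⟨x, hx⟩ : ↥(𝒮.S u)) : K)) := by
    intro J'
    induction J' using Finset.induction_on with
    | empty =>
      intro _
      refine ⟨M0, (σ : K →+* K).comp M0.subtype, ?_, ⟨le_rfl, fun x hx => rfl⟩, ?_⟩
      · exact biSup_mono fun w hw => Or.inl hw
      · intro u hu hu'
        simp at hu'
    | insert u J' huJ' ih =>
      intro hsub
      obtain ⟨N, θ, hN, ⟨hM, hθM⟩, hθ⟩ := ih fun v hv => hsub (Finset.mem_insert_of_mem hv)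
      have hu : u ∈ J := hsub (Finset.mem_insert_self _ _)
      have hne : u ≠ ∅ := by
        intro h
        have := hJ2 u hu
        rw [h] at this
        simp at this
      let W : Set (Finset V) := (I \ ↑J) ∪ ↑J'
      have hWu : ∀ w ∈ W, w ∩ u ∈ u.powerset.erase u := by
        intro w hw
        rw [Finset.mem_erase, Finset.mem_powerset]
        refine ⟨fun h => ?_, Finset.inter_subset_right⟩
        have huw : u ⊆ w := Finset.inter_eq_right.1 h
        rcases hw with ⟨⟨u', hu', hwu'⟩, hwJ⟩ | hw
        · have h1 : u = u' := hJanti u hu u' hu' (huw.trans hwu')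
          subst h1
          exact hwJ (by rw [Finset.Subset.antisymm hwu' huw]; exact hu)
        · have h1 : u = w := hJanti u hu w (hsub (Finset.mem_insert_of_mem hw)) huw
          exact huJ' (h1 ▸ hw)
      have hEq : (⨆ v ∈ u.powerset.erase u, algCl (𝒮.S v)) = ⨆ w ∈ W, algCl (𝒮.S (w ∩ u)) := by
        apply le_antisymm
        · refine iSup₂_le fun v hv => ?_
          have h1 : v ∩ u = v := Finset.inter_eq_left.2
            (Finset.mem_powerset.1 (Finset.mem_of_mem_erase hv))
          refine le_iSup₂_of_le v (Or.inl (hproper u hu v hv)) ?_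
          rw [h1]
        · refine iSup₂_le fun w hw => ?_
          exact le_iSup₂_of_le (f := fun v (_ : v ∈ u.powerset.erase u) => algCl (𝒮.S v))
            (w ∩ u) (hWu w hw) le_rfl
      have hSm : 𝒮.Sminus u ≤ ⨆ v ∈ u.powerset.erase u, algCl (𝒮.S v) :=
        iSup₂_mono fun v _ => SIC.le_algCl _
      have hLI1 := SIC.li_of_ld (SIC.Sminus_le 𝒮 u) hSm (hreg u hne)
      have hLI2 := SIC.main_LI hAinv 𝒮 u W
      have hLI : SIC.LI (𝒮.Sminus u) (𝒮.S u) N := by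
        intro κ e he hli
        have h1 := hLI1 κ e he hli
        rw [hEq] at h1
        exact SIC.li_mono hN (hLI2 κ e (fun i => SIC.le_algCl _ (he i)) h1)
      have hSN : 𝒮.Sminus u ≤ N := (hmin u hu).trans hM
      obtain ⟨h, hh1, hh2⟩ := SIC.glue (SIC.Sminus_le 𝒮 u) hSN hLI
        (fun x hx => SIC.alg_Sminus 𝒮 (hJ2 u hu) hx)
        ((𝒮.S u).subtype.comp (τ u hu)) θ (by
          intro c
          rw [hθM c (hmin u hu c.2)]
          exact hτ u hu c _ c.2)
      refine ⟨𝒮.S u ⊔ N, h, ?_, ⟨hM.trans le_sup_right, ?_⟩, ?_⟩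
      · refine sup_le ?_ (hN.trans (biSup_mono fun w hw => ?_))
        · refine (SIC.le_algCl _).trans (le_iSup₂_of_le
            (f := fun w (_ : w ∈ (I \ ↑J) ∪ ↑(insert u J')) => algCl (𝒮.S w)) u (Or.inr ?_) le_rfl)
          exact Finset.mem_insert_self _ _
        · rcases hw with hw | hw
          · exact Or.inl hw
          · exact Or.inr (Finset.mem_insert_of_mem hw)
      · intro x hx
        rw [hh2 x (hM hx), hθM x hx]
      · intro v hv hv'
        rcases Finset.mem_insert.1 hv' with rfl | hv'
        · exact ⟨le_sup_left, fun x hx => hh1 x hx⟩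
        · obtain ⟨h3, h4⟩ := hθ v hv hv'
          exact ⟨h3.trans le_sup_right, fun x hx => by rw [hh2 x (h3 hx), h4]⟩
  obtain ⟨N, θ, -, ⟨hM, hθM⟩, hθ⟩ := step J (Finset.Subset.refl J)
  have hJN : (⨆ u ∈ J, 𝒮.S u) ≤ N := iSup₂_le fun u hu => (hθ u hu hu).1
  have hall : ∀ w : Finset V, 𝒮.S w ≤ N := by
    intro w
    induction w using Finset.strongInduction with
    | H w ih =>
      by_cases hw : w ∈ I
      · obtain ⟨u, hu, hwu⟩ := hw
        exact (𝒮.mono hwu).trans (hθ u hu hu).1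
      · rw [h𝒮 w hw]
        refine iSup₂_le fun v hv => ih v ?_
        rw [Finset.mem_erase, Finset.mem_powerset] at hv
        exact hv.2.ssubset_of_ne hv.1
  refine ⟨θ.comp (Subfield.inclusion (sup_le hJN hM)), ?_, ?_, ?_⟩
  · intro u hu x hxb hxu
    exact (hθ u hu hu).2 x hxu
  · intro x hxb hx
    exact hθM x hx
  · refine ⟨θ.comp (Subfield.inclusion (hall Finset.univ)), ?_⟩
    intro u hu x hxV hxu
    exact (hθ u hu hu).2 x hxu
end

section
/- Let n ≥ 2 and let X₁, …, X_n be finite nonempty sets; write X = ∏ᵢ Xᵢ. Let f : X → ℝ be any function and, for every nonempty proper subset v of {1,…,n}, let W_v be a subset of ∏_{i∈v} Xᵢ. For x⁰, x¹ ∈ X and ι ∈ {0,1}ⁿ let x^ι ∈ X be the point with i-th coordinate (x^{ι(i)})ᵢ. Then ( ∑_{x ∈ X with x|_v ∈ W_v for all nonempty proper v} f(x) )^{2ⁿ} ≤ ( ∏ᵢ |Xᵢ| )^{2ⁿ−2} · ∑_{x⁰, x¹ ∈ X} ∏_{ι ∈ {0,1}ⁿ} f(x^ι). (The inductive inequality,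 in the case of Cartesian products, established in the proof of the proposition that quasirandomness implies edge-uniformity; the right-hand sum is the 2ⁿ-th power of the Gowers box norm of f and is automatically nonnegative.) -/
theorem aux_pow_sum {α : Type*} [Fintype α] (n : ℕ) (a : α → ℝ) :
    (∑ x, a x) ^ (2 ^ n) ≤ (Fintype.card α : ℝ) ^ (2 ^ n - 1) * ∑ x, a x ^ (2 ^ n) := by
  induction n generalizing a with
  | zero => simp
  | succ n ih =>
    have h1 : (∑ x, a x) ^ 2 ≤ (Fintype.card α : ℝ) * ∑ x, a x ^ 2 := by
      simpa using sq_sum_le_card_mul_sum_sq (s := (Finset.univ : Finset α)) (f := a)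
    have hp : 1 ≤ 2 ^ n := Nat.one_le_two_pow
    have e : 2 ^ (n + 1) - 1 = 2 ^ n + (2 ^ n - 1) := by rw [pow_succ]; omega
    calc (∑ x, a x) ^ (2 ^ (n + 1)) = ((∑ x, a x) ^ 2) ^ (2 ^ n) := by
          rw [← pow_mul, pow_succ']
      _ ≤ ((Fintype.card α : ℝ) * ∑ x, a x ^ 2) ^ (2 ^ n) := by gcongr
      _ = (Fintype.card α : ℝ) ^ (2 ^ n) * (∑ x, a x ^ 2) ^ (2 ^ n) := mul_pow _ _ _
      _ ≤ (Fintype.card α : ℝ) ^ (2 ^ n) *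
          ((Fintype.card α : ℝ) ^ (2 ^ n - 1) * ∑ x, (a x ^ 2) ^ (2 ^ n)) := by
          gcongr; exact ih _
      _ = _ := by
          rw [e, pow_add, mul_assoc]
          have e2 : ∀ x, (a x ^ 2) ^ (2 ^ n) = a x ^ (2 ^ (n + 1)) := fun x => by
            rw [← pow_mul, ← pow_succ']
          simp only [e2]

theorem aux_sum_cons {n : ℕ} (X : Fin (n + 1) → Type*) [∀ i, Fintype (X i)]
    (F : (∀ i, X i) → ℝ) :
    ∑ x, F x = ∑ a : X 0, ∑ y : (∀ i : Fin n, X i.succ), F (Fin.cons a y) := by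
  rw [← (Fin.consEquiv X).sum_comp, Fintype.sum_prod_type]
  rfl

theorem aux_prod_cons {n : ℕ} (F : (Fin (n + 1) → Bool) → ℝ) :
    ∏ x, F x = (∏ y : Fin n → Bool, F (Fin.cons false y)) * ∏ y, F (Fin.cons true y) := by
  rw [← (Fin.consEquiv (fun _ : Fin (n + 1) => Bool)).prod_comp, Fintype.prod_prod_type]
  simp [mul_comm, Fin.consEquiv]

theorem aux_mix_cons {n : ℕ} (X : Fin (n + 1) → Type*) (a b : X 0)
    (y z : ∀ i : Fin n, X i.succ) (c : Bool) (ι : Fin n → Bool) :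
    (fun i => if (Fin.cons c ι : Fin (n + 1) → Bool) i then (Fin.cons b z : ∀ i, X i) i
      else (Fin.cons a y : ∀ i, X i) i)
      = Fin.cons (if c then b else a) (fun i => if ι i then z i else y i) := by
  funext i
  refine Fin.cases ?_ (fun j => ?_) i <;> simp

theorem aux_main (n : ℕ) : ∀ (X : Fin n → Type*) [∀ i, Fintype (X i)] [∀ i, Nonempty (X i)]
    (f : (∀ i, X i) → ℝ) (g : Fin n → (∀ i, X i) → ℝ) (_ : ∀ i x, |g i x| ≤ 1)
    (_ : ∀ i x y, (∀ j, j ≠ i → x j = y j) → g i x = g i y),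
    (∑ x, f x * ∏ i, g i x) ^ (2 ^ n)
      ≤ (∏ i, (Fintype.card (X i) : ℝ)) ^ (2 ^ n - 2) *
        ∑ x0 : ∀ i, X i, ∑ x1 : ∀ i, X i,
          ∏ ι : Fin n → Bool, f (fun i => if ι i then x1 i else x0 i) := by
  induction n with
  | zero =>
    intro X _ _ f g _ _
    simp only [Fintype.sum_unique, Fintype.prod_unique]
    simp
  | succ n ih =>
    intro X _ _ f g hg hgi
    set Y : Fin n → Type _ := fun i => X i.succ with hY
    obtain ⟨a0⟩ : Nonempty (X 0) := inferInstance
    set N : ℝ := ∏ i : Fin n, (Fintype.card (X i.succ) : ℝ) with hN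
    have hNc : (Fintype.card (∀ i, Y i) : ℝ) = N := by
      rw [Fintype.card_pi]; push_cast; rfl
    have hN0 : 0 ≤ N := by positivity
    let F : X 0 × X 0 → (∀ i, Y i) → ℝ := fun p y =>
      f (Fin.cons p.1 y) * f (Fin.cons p.2 y)
    let G : X 0 × X 0 → Fin n → (∀ i, Y i) → ℝ := fun p i y =>
      g i.succ (Fin.cons p.1 y) * g i.succ (Fin.cons p.2 y)
    let T : X 0 × X 0 → ℝ := fun p => ∑ y, F p y * ∏ i, G p i y
    let B : X 0 × X 0 → ℝ := fun p => ∑ x0 : ∀ i, Y i, ∑ x1 : ∀ i, Y i,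
          ∏ ι : Fin n → Bool, F p (fun i => if ι i then x1 i else x0 i)
    have hT : ∀ p, T p ^ (2 ^ n) ≤ N ^ (2 ^ n - 2) * B p := by
      intro p
      refine ih Y (F p) (G p) ?_ ?_
      · intro i x
        simp only [G, abs_mul]
        exact mul_le_one₀ (hg _ _) (abs_nonneg _) (hg _ _)
      · intro i x y h
        simp only [G]
        congr 1
        all_goals
          apply hgi
          intro j
          refine Fin.cases ?_ (fun k => ?_) j
          · intro _; simp
          · intro hk
            simp only [Fin.cons_succ]
            exact h k (fun e => hk (by rw [e]))
    have hbox : (∑ x0 : ∀ i, X i, ∑ x1 : ∀ i, X i,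
          ∏ ι : Fin (n + 1) → Bool, f (fun i => if ι i then x1 i else x0 i)) = ∑ p, B p := by
      rw [aux_sum_cons, Fintype.sum_prod_type]
      refine Finset.sum_congr rfl fun a _ => ?_
      simp only [B]
      refine Eq.trans ?_ Finset.sum_comm
      refine Finset.sum_congr rfl fun y _ => ?_
      rw [aux_sum_cons]
      refine Finset.sum_congr rfl fun b _ => ?_
      refine Finset.sum_congr rfl fun z _ => ?_
      rw [aux_prod_cons, ← Finset.prod_mul_distrib]
      refine Finset.prod_congr rfl fun ι _ => ?_
      rw [aux_mix_cons, aux_mix_cons]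
      simp [F]
    have hCS : (∑ x, f x * ∏ i, g i x) ^ 2 ≤ N * ∑ p, T p := by
      have h1 : (∑ x, f x * ∏ i, g i x) = ∑ y : (∀ i, Y i), g 0 (Fin.cons a0 y) *
          ∑ a : X 0, f (Fin.cons a y) * ∏ i : Fin n, g i.succ (Fin.cons a y) := by
        rw [aux_sum_cons, Finset.sum_comm]
        refine Finset.sum_congr rfl fun y _ => ?_
        rw [Finset.mul_sum]
        refine Finset.sum_congr rfl fun a _ => ?_
        rw [Fin.prod_univ_succ]
        have : g 0 (Fin.cons a y) = g 0 (Fin.cons a0 y) := by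
          apply hgi
          intro j
          refine Fin.cases ?_ (fun k => ?_) j
          · intro h; exact absurd rfl h
          · intro _; simp
        rw [this]; ring
      rw [h1]
      refine (Finset.sum_mul_sq_le_sq_mul_sq _ _ _).trans ?_
      have h2 : ∑ y : (∀ i, Y i), g 0 (Fin.cons a0 y) ^ 2 ≤ N := by
        rw [← hNc]
        calc _ ≤ ∑ y : (∀ i, Y i), (1 : ℝ) := by
              refine Finset.sum_le_sum fun y _ => ?_
              rw [sq_le_one_iff_abs_le_one]; exact hg _ _
          _ = _ := by simp
      have h3 : ∑ y : (∀ i, Y i), (∑ a : X 0, f (Fin.cons a y) *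
          ∏ i : Fin n, g i.succ (Fin.cons a y)) ^ 2 = ∑ p, T p := by
        simp only [T]
        rw [Finset.sum_comm]
        refine Finset.sum_congr rfl fun y _ => ?_
        rw [sq, Finset.sum_mul_sum, Fintype.sum_prod_type]
        refine Finset.sum_congr rfl fun a _ => ?_
        refine Finset.sum_congr rfl fun b _ => ?_
        simp only [F, G, Finset.prod_mul_distrib]
        ring
      rw [h3]
      refine mul_le_mul_of_nonneg_right h2 ?_
      rw [← h3]; positivity
    have hp : 1 ≤ 2 ^ n := Nat.one_le_two_pow
    have hexp : N ^ (2 ^ n) * N ^ (2 ^ n - 2) = N ^ (2 ^ (n + 1) - 2) := by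
      rcases n with _ | n
      · simp [hN]
      · rw [← pow_add]; congr 1
        have : 1 ≤ 2 ^ n := Nat.one_le_two_pow
        simp only [pow_succ] at *; omega
    set C : ℝ := (Fintype.card (X 0) : ℝ) with hC
    have hexp2 : (C * C) ^ (2 ^ n - 1) = C ^ (2 ^ (n + 1) - 2) := by
      rw [← sq, ← pow_mul]; congr 1; rw [pow_succ]; omega
    rw [hbox, Fin.prod_univ_succ]
    calc (∑ x, f x * ∏ i, g i x) ^ (2 ^ (n + 1))
        = ((∑ x, f x * ∏ i, g i x) ^ 2) ^ (2 ^ n) := by rw [← pow_mul, pow_succ']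
      _ ≤ (N * ∑ p, T p) ^ (2 ^ n) := pow_le_pow_left₀ (sq_nonneg _) hCS _
      _ = N ^ (2 ^ n) * (∑ p, T p) ^ (2 ^ n) := mul_pow _ _ _
      _ ≤ N ^ (2 ^ n) * ((C * C) ^ (2 ^ n - 1) * ∑ p, T p ^ (2 ^ n)) := by
          refine mul_le_mul_of_nonneg_left ?_ (by positivity)
          have := aux_pow_sum n T
          rw [Fintype.card_prod] at this
          push_cast at this
          exact this
      _ ≤ N ^ (2 ^ n) * ((C * C) ^ (2 ^ n - 1) * ∑ p, N ^ (2 ^ n - 2) * B p) := by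
          have hC0 : 0 ≤ C := by positivity
          refine mul_le_mul_of_nonneg_left ?_ (by positivity)
          refine mul_le_mul_of_nonneg_left ?_ (by positivity)
          exact Finset.sum_le_sum fun p _ => hT p
      _ = (C * N) ^ (2 ^ (n + 1) - 2) * ∑ p, B p := by
          rw [← Finset.mul_sum, mul_pow C N, ← hexp, ← hexp2]; ring


/-- the inductive Cauchy–Schwarz inequality (Cartesian-product
case) from the proof that quasirandomness implies edge-uniformity: the `2ⁿ`-th
power of the sum of `f` over a chain set is at most
`(∏ᵢ|Xᵢ|)^{2ⁿ-2}` times the `2ⁿ`-th power of the Gowers box norm of `f`. -/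
theorem chain_sum_le_box_norm (n : ℕ) (hn : 2 ≤ n)
    (X : Fin n → Type*) [∀ i, Fintype (X i)] [∀ i, Nonempty (X i)]
    (f : (∀ i, X i) → ℝ)
    (W : (v : Finset (Fin n)) → Set ((i : {j // j ∈ v}) → X i.1)) :
    (∑ x : ∀ i, X i,
        ({x : ∀ i, X i | ∀ v : Finset (Fin n), v.Nonempty → v ≠ Finset.univ →
            (fun i : {j // j ∈ v} => x i.1) ∈ W v} : Set (∀ i, X i)).indicator f x)
        ^ (2 ^ n)
      ≤ (∏ i, (Fintype.card (X i) : ℝ)) ^ (2 ^ n - 2) *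
        ∑ x0 : ∀ i, X i, ∑ x1 : ∀ i, X i,
          ∏ ι : Fin n → Bool, f (fun i => if ι i then x1 i else x0 i) := by

  classical
  let g : Fin n → (∀ i, X i) → ℝ := fun i x =>
    if ∀ v : Finset (Fin n), v.Nonempty → i ∉ v → (fun i : {j // j ∈ v} => x i.1) ∈ W v
    then 1 else 0
  have key := aux_main n X f g ?_ ?_
  · convert key using 3 with x
    by_cases hx : ∀ i, ∀ v : Finset (Fin n), v.Nonempty → i ∉ v →
        (fun i : {j // j ∈ v} => x i.1) ∈ W v
    · rw [Set.indicator_of_mem]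
      · rw [Finset.prod_eq_one, mul_one]
        intro i _
        exact if_pos (hx i)
      · intro v hv hu
        obtain ⟨i, hi⟩ : ∃ i, i ∉ v := by
          by_contra! h
          exact hu (Finset.eq_univ_iff_forall.2 h)
        exact hx i v hv hi
    · rw [Set.indicator_of_notMem]
      · obtain ⟨i, hi⟩ := not_forall.1 hx
        rw [Finset.prod_eq_zero (Finset.mem_univ i), mul_zero]
        exact if_neg hi
      · intro h
        exact hx fun i v hv hi => h v hv fun e => hi (e ▸ Finset.mem_univ i)
  · intro i x
    simp only [g]
    split_ifs <;> simp
  · intro i x y h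
    have : (∀ v : Finset (Fin n), v.Nonempty → i ∉ v →
        (fun i : {j // j ∈ v} => x i.1) ∈ W v) ↔ (∀ v : Finset (Fin n), v.Nonempty → i ∉ v →
        (fun i : {j // j ∈ v} => y i.1) ∈ W v) := by
      refine forall_congr' fun v => forall_congr' fun _ => forall_congr' fun hi => ?_
      have e : (fun i : {j // j ∈ v} => x i.1) = (fun i : {j // j ∈ v} => y i.1) := by
        funext j
        exact h j.1 fun e => hi (e ▸ j.2)
      rw [e]
    simp only [g, this]
end

section
/- Let n ≥ 2 and let X₁, …, X_n be finite nonempty sets; write X = ∏ᵢ Xᵢ. Let φ ⊆ X, δ = |φ|/|X|, and f = 1_φ − δ (as a real-valued function on X). Let ε ≥ 0 and assume that for every family (W_v) of subsets W_v ⊆ ∏_{i∈v} Xᵢ indexed by the nonempty proper subsets v of {1,…,n}, one has | ∑_{x ∈ X with x|_v ∈ W_v for all such v} f(x) | ≤ ε·|X|. Then ∑_{x⁰, x¹ ∈ X} ∏_{ι ∈ {0,1}ⁿ} f(x^ι) ≤ 2^{2ⁿ} · ε · |X|², where x^ι ∈ X has i-th coordinate (x^{ι(i)})ᵢ. (The Cartesian-product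 case of the proposition that edge-uniformity implies quasirandomness.) -/
/-- (Cartesian-product case of "edge-uniformity implies
quasirandomness".) If `f = 1_φ − |φ|/|X|` has all its chain sums bounded by
`ε·|X|`, then the `2ⁿ`-th power of its Gowers box norm is at most
`2^{2ⁿ}·ε·|X|²`. -/
theorem edge_uniformity_implies_quasirandomness (n : ℕ) (hn : 2 ≤ n)
    (X : Fin n → Type*) [∀ i, Fintype (X i)] [∀ i, DecidableEq (X i)]
    [∀ i, Nonempty (X i)]
    (φ : Finset (∀ i, X i)) (ε : ℝ) (hε : 0 ≤ ε)
    (huniform : ∀ W : (v : Finset (Fin n)) → Set ((i : {j // j ∈ v}) → X i.1),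
      |∑ x : ∀ i, X i,
          ({x : ∀ i, X i | ∀ v : Finset (Fin n), v.Nonempty → v ≠ Finset.univ →
              (fun i : {j // j ∈ v} => x i.1) ∈ W v} : Set (∀ i, X i)).indicator
            (fun x => (if x ∈ φ then (1 : ℝ) else 0) -
              (φ.card : ℝ) / ∏ i, (Fintype.card (X i) : ℝ)) x|
        ≤ ε * ∏ i, (Fintype.card (X i) : ℝ)) :
    ∑ x0 : ∀ i, X i, ∑ x1 : ∀ i, X i,
        ∏ ι : Fin n → Bool,
          ((if (fun i => if ι i then x1 i else x0 i) ∈ φ then (1 : ℝ) else 0) -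
            (φ.card : ℝ) / ∏ i, (Fintype.card (X i) : ℝ))
      ≤ 2 ^ (2 ^ n) * ε * (∏ i, (Fintype.card (X i) : ℝ)) ^ 2 := by
  classical
  set P : ℝ := ∏ i, (Fintype.card (X i) : ℝ) with hP
  set δ : ℝ := (φ.card : ℝ) / P with hδ
  have hPcard : P = (Fintype.card (∀ i, X i) : ℝ) := by
    rw [hP, Fintype.card_pi]; push_cast; rfl
  have hPpos : 0 < P := by
    rw [hPcard]; exact_mod_cast Fintype.card_pos
  have hδ0 : 0 ≤ δ := by positivity
  have hδ1 : δ ≤ 1 := by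
    rw [hδ, div_le_one hPpos, hPcard]
    exact_mod_cast Finset.card_le_univ φ
  have key : ∀ (x1 : ∀ i, X i) (t : Finset (Fin n → Bool)), (fun _ => false) ∉ t →
      |∑ x0 : ∀ i, X i, ((if x0 ∈ φ then (1 : ℝ) else 0) - δ) *
        ∏ ι ∈ t, (if (fun i => if ι i then x1 i else x0 i) ∈ φ then (1 : ℝ) else 0)| ≤ ε * P := by
    intro x1 t ht
    by_cases hQ : (fun _ => true) ∈ t → x1 ∈ φ
    · have h := huniform (fun v => {y | (fun i => !decide (i ∈ v)) ∈ t →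
        (fun i => if h : i ∈ v then y ⟨i, h⟩ else x1 i) ∈ φ})
      refine le_of_eq_of_le ?_ h
      congr 1
      refine Finset.sum_congr rfl fun x0 _ => ?_
      rw [Set.indicator_apply]
      have e : ∀ v : Finset (Fin n), (fun i => if i ∈ v then x0 i else x1 i) =
          (fun i => if (!decide (i ∈ v)) = true then x1 i else x0 i) := by
        intro v; funext i; by_cases hi : i ∈ v <;> simp [hi]
      generalize ((if x0 ∈ φ then (1 : ℝ) else 0) - δ) = c
      split_ifs with hc
      · rw [Finset.prod_eq_one, mul_one]
        intro ι hι
        rw [if_pos]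
        have hι' : (fun i => !decide (i ∈ Finset.univ.filter fun i => ι i = false)) = ι := by
          funext i; cases hh : ι i <;> simp [hh]
        by_cases hem : (Finset.univ.filter fun i => ι i = false).Nonempty
        · have hne : (Finset.univ.filter fun i => ι i = false) ≠ Finset.univ := by
            intro hu
            apply ht
            have : ι = fun _ => false := by
              funext i
              have : i ∈ (Finset.univ.filter fun i => ι i = false) := by rw [hu]; simp
              simpa using this
            rwa [← this]
          have h3 := hc _ hem hne
          simp only [Set.mem_ofPred_eq, dite_eq_ite] at h3
          rw [hι', e] at h3
          have h4 := h3 hι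
          convert h4 using 3 with i
          simp
        · have hall : ι = fun _ => true := by
            funext i
            by_contra hi
            exact hem ⟨i, by simpa using hi⟩
          subst hall
          simpa using hQ hι
      · simp only [Set.mem_ofPred_eq, dite_eq_ite] at hc
        push Not at hc
        obtain ⟨v, _, _, hv, hn⟩ := hc
        rw [Finset.prod_eq_zero hv, mul_zero]
        rw [if_neg]
        rw [← e]
        exact hn
    · push Not at hQ
      rw [Finset.sum_eq_zero]
      · rw [abs_zero]; positivity
      · intro x0 _
        rw [Finset.prod_eq_zero hQ.1, mul_zero]
        simpa using hQ.2
  have main : ∀ x1 : ∀ i, X i, ∑ x0 : ∀ i, X i, ∏ ι : Fin n → Bool,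
      ((if (fun i => if ι i then x1 i else x0 i) ∈ φ then (1 : ℝ) else 0) - δ)
      ≤ 2 ^ (2 ^ n) * (ε * P) := by
    intro x1
    set s : Finset (Fin n → Bool) := Finset.univ.erase (fun _ => false) with hs
    have hexp : ∀ x0 : ∀ i, X i, ∏ ι : Fin n → Bool,
      ((if (fun i => if ι i then x1 i else x0 i) ∈ φ then (1 : ℝ) else 0) - δ) =
      ∑ t ∈ s.powerset, (∏ ι ∈ s \ t, (-δ)) * (((if x0 ∈ φ then (1 : ℝ) else 0) - δ) *
        ∏ ι ∈ t, (if (fun i => if ι i then x1 i else x0 i) ∈ φ then (1 : ℝ) else 0)) := by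
      intro x0
      rw [← Finset.mul_prod_erase Finset.univ _ (Finset.mem_univ (fun _ => false)), ← hs]
      simp only [sub_eq_add_neg _ δ]
      rw [Finset.prod_add, Finset.mul_sum]
      refine Finset.sum_congr rfl fun t _ => ?_
      simp only [Bool.false_eq_true, if_false]
      ring
    simp only [hexp]
    rw [Finset.sum_comm]
    have hb : ∀ t ∈ s.powerset, ∑ x0 : ∀ i, X i,
        (∏ ι ∈ s \ t, (-δ)) * (((if x0 ∈ φ then (1 : ℝ) else 0) - δ) *
        ∏ ι ∈ t, (if (fun i => if ι i then x1 i else x0 i) ∈ φ then (1 : ℝ) else 0)) ≤ ε * P := by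
      intro t ht
      rw [← Finset.mul_sum]
      refine (le_abs_self _).trans ?_
      rw [abs_mul]
      have h1 : |∏ ι ∈ s \ t, (-δ)| ≤ 1 := by
        rw [Finset.prod_const, abs_pow, abs_neg, abs_of_nonneg hδ0]
        exact pow_le_one₀ hδ0 hδ1
      have h2 := key x1 t (fun hf => by
        have := Finset.mem_powerset.1 ht hf
        simp [hs] at this)
      calc _ ≤ 1 * (ε * P) := mul_le_mul h1 h2 (abs_nonneg _) zero_le_one
        _ = _ := one_mul _
    refine (Finset.sum_le_card_nsmul _ _ _ hb).trans ?_
    rw [nsmul_eq_mul, Finset.card_powerset]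
    push_cast
    refine mul_le_mul_of_nonneg_right ?_ (by positivity)
    refine pow_le_pow_right₀ (by norm_num) ?_
    calc s.card ≤ Fintype.card (Fin n → Bool) := Finset.card_le_univ s
      _ = 2 ^ n := by simp
  rw [Finset.sum_comm]
  refine (Finset.sum_le_card_nsmul _ _ _ (fun x1 _ => main x1)).trans (le_of_eq ?_)
  rw [nsmul_eq_mul, Finset.card_univ, ← hPcard]
  ring
end
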